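/- arXiv:1511.05540 — 6 statements merged into one kernel-verified Lean document; each statement's English description precedes it below -/
import Mathlib

section
/- Let R be a commutative ring, m ≥ 0 and n ≥ 1. Let A be an n×n matrix over the Grassmann algebra E^m, let A₀ ∈ M_n(R) be the matrix of degree-zero homogeneous components of the entries of A, and let f(x) ∈ R[x] be the characteristic polynomial of A₀. Then f(A)^(⌈m/2⌉+1) = 0, where f is applied to A by mapping its coefficients into E^m via the structure map R → E^m and evaluating at A. -/
/-!
Write `A = A₀ + A₁ + A₂` with `A₁` of degree `1` and `A₂` of degree at least `2`, and let
`P = adj (X - A₀)`, so that `P * (X - A₀) = f`. Since `(P * (A₁ + A₂)) ^ (m + 1) = 0`, summing a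
geometric series gives `f ^ (m + 1) = W * (X - A)` with
`W = ∑ j ≤ m, f ^ (m - j) * (P * (A₁ + A₂)) ^ j * P`.

Over `R[X]`, the coefficient of `s` in `adj (B + s M) * (B + s M) = det (B + s M)` shows that
`P * M * P` is a multiple of `P` modulo `f`. Hence `P * A₁ * P = t * P + f * G` with `t` an
`R[X]`-combination of scalar matrices of degree `1`, and such `t` satisfy `t * y * t = 0` for all
`y`. If `f` is given weight `2`, this makes the weight of `(P * (A₁ + A₂)) ^ j * P` at least
`2 * j - 1` instead of only `j`. As degrees above `m` vanish, `W` is divisible by `f ^ ⌊m / 2⌋`.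
The monic polynomial `f` can be cancelled, so `f ^ (⌈m / 2⌉ + 1)` is a left multiple of `X - A`,
and evaluating at `A` from the right finishes the proof.
-/

/-- Decreasing multiplicative filtrations of an algebra by submodules, indexed by `ℕ` and starting
from the whole algebra. -/
structure IsMulFiltration {K S : Type*} [CommSemiring K] [Semiring S] [Algebra K S]
    (D : ℕ → Submodule K S) : Prop where
  zero_eq_top : D 0 = ⊤
  antitone : Antitone D
  mul_mem {a b : ℕ} {x y : S} (hx : x ∈ D a) (hy : y ∈ D b) : x * y ∈ D (a + b)

section Filtration

open scoped Pointwise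

variable {K S : Type*} [CommSemiring K] [Semiring S] [Algebra K S] {D F : ℕ → Submodule K S}

namespace IsMulFiltration

theorem mem_zero (hD : IsMulFiltration D) (x : S) : x ∈ D 0 := by
  simp [hD.zero_eq_top]

theorem mul_mem_of_le (hD : IsMulFiltration D) {a b c : ℕ} {x y : S} (hx : x ∈ D a)
    (hy : y ∈ D b) (hc : c ≤ a + b) : x * y ∈ D c :=
  hD.antitone hc (hD.mul_mem hx hy)

theorem pow_mem (hD : IsMulFiltration D) {x : S} (hx : x ∈ D 1) : ∀ k : ℕ, x ^ k ∈ D k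
  | 0 => hD.mem_zero _
  | k + 1 => pow_succ x k ▸ hD.mul_mem (hD.pow_mem hx k) hx

end IsMulFiltration

/-- The filtration generated by `D` when the scalar `f` is given weight `2`. -/
def weightedFiltration (D : ℕ → Submodule K S) (f : K) (s : ℕ) : Submodule K S :=
  Submodule.span K {x | ∃ a b, s ≤ 2 * a + b ∧ ∃ z ∈ D b, f ^ a • z = x}

theorem pow_smul_mem_weightedFiltration (f : K) {a b s : ℕ} (hs : s ≤ 2 * a + b) {z : S}
    (hz : z ∈ D b) : f ^ a • z ∈ weightedFiltration D f s :=
  Submodule.subset_span ⟨a, b, hs, z, hz, rfl⟩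

theorem le_weightedFiltration (D : ℕ → Submodule K S) (f : K) (s : ℕ) :
    D s ≤ weightedFiltration D f s := fun z hz ↦ by
  simpa using pow_smul_mem_weightedFiltration f (a := 0) (by lia) hz

theorem IsMulFiltration.weighted (hD : IsMulFiltration D) (f : K) :
    IsMulFiltration (weightedFiltration D f) where
  zero_eq_top := top_le_iff.mp (hD.zero_eq_top ▸ le_weightedFiltration D f 0)
  antitone _ _ hst := Submodule.span_mono fun _ ⟨a, b, hs, hz⟩ ↦ ⟨a, b, hst.trans hs, hz⟩
  mul_mem {s t x y} hx hy := by
    refine (Submodule.span_mul_span K _ _).trans_le (Submodule.span_mono ?_)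
      (Submodule.mul_mem_mul hx hy)
    rintro _ ⟨_, ⟨a, b, hs, z, hz, rfl⟩, _, ⟨a', b', ht, z', hz', rfl⟩, rfl⟩
    exact ⟨a + a', b + b', by lia, z * z', hD.mul_mem hz hz', by
      simp only [smul_mul_smul_comm, pow_add]⟩

theorem pow_smul_mem_weightedFiltration_add {f : K} {s : ℕ} {x : S} (k : ℕ)
    (hx : x ∈ weightedFiltration D f s) : f ^ k • x ∈ weightedFiltration D f (s + 2 * k) := by
  induction hx using Submodule.span_induction with
  | mem x hx =>
    obtain ⟨a, b, hs, z, hz, rfl⟩ := hx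
    rw [smul_smul, ← pow_add]
    exact pow_smul_mem_weightedFiltration f (by lia) hz
  | zero => simp
  | add x y _ _ hx hy => exact smul_add (f ^ k) x y ▸ add_mem hx hy
  | smul c x _ hx => exact smul_comm c (f ^ k) x ▸ Submodule.smul_mem _ c hx

theorem weightedFiltration_le_pow_smul_top {m : ℕ} (hm : ∀ b > m, D b = ⊥) (f : K) {a s : ℕ}
    (hs : 2 * a + m ≤ s + 1) : weightedFiltration D f s ≤ f ^ a • (⊤ : Submodule K S) := by
  refine Submodule.span_le.mpr ?_
  rintro _ ⟨k, b, hsk, z, hz, rfl⟩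
  obtain hb | hb := le_or_gt b m
  · rw [← Nat.add_sub_of_le (show a ≤ k by lia), pow_add, mul_smul]
    exact Submodule.smul_mem_pointwise_smul _ _ _ trivial
  · obtain rfl : z = 0 := by simpa [hm b hb] using hz
    rw [smul_zero]
    exact zero_mem _

/-- The elements of degree `s - 1` (any element, if `s = 0`) that behave as if they had degree `s`
once they are multiplied by some `t * y` with `t` of degree `1`. If `t * y * t = 0` for all `y`,
then left multiplication by `t` raises the index `s` by `2`, although `t` has only degree `1`. -/
def leftBoosted (F : ℕ → Submodule K S) (t : S) (s : ℕ) : Submodule K S where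
  carrier := {w | w ∈ F (s - 1) ∧ ∀ p, ∀ y ∈ F p, t * y * w ∈ F (p + s + 1)}
  zero_mem' := by simp
  add_mem' := fun ⟨hx, hx'⟩ ⟨hy, hy'⟩ ↦ ⟨add_mem hx hy, fun p z hz ↦ by
    simpa only [mul_add] using add_mem (hx' p z hz) (hy' p z hz)⟩
  smul_mem' c _ := fun ⟨hx, hx'⟩ ↦ ⟨Submodule.smul_mem _ c hx, fun p z hz ↦ by
    simpa only [mul_smul_comm] using Submodule.smul_mem _ c (hx' p z hz)⟩

namespace IsMulFiltration

variable {t : S}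

theorem le_leftBoosted (hF : IsMulFiltration F) (ht : t ∈ F 1) {r s : ℕ} (hrs : s ≤ r) :
    F r ≤ leftBoosted F t s := fun _ hw ↦
  ⟨hF.antitone (by lia) hw, fun _ _ hy ↦
    hF.mul_mem_of_le (hF.mul_mem ht hy) hw (by lia)⟩

theorem mul_mem_leftBoosted (hF : IsMulFiltration F) {p s : ℕ} {x w : S} (hx : x ∈ F p)
    (hw : w ∈ leftBoosted F t s) : x * w ∈ leftBoosted F t (p + s) :=
  ⟨hF.mul_mem_of_le hx hw.1 (by lia), fun q y hy ↦ by
    simpa only [mul_assoc, add_assoc] using hw.2 (q + p) (y * x) (hF.mul_mem hy hx)⟩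

theorem left_mul_mem_leftBoosted (hF : IsMulFiltration F) (ht : ∀ y, t * y * t = 0) {s : ℕ}
    {w : S} (hw : w ∈ leftBoosted F t s) : t * w ∈ leftBoosted F t (s + 2) :=
  ⟨by simpa using hw.2 0 1 (hF.mem_zero 1), fun p y _ ↦ by simp [← mul_assoc, ht]⟩

theorem mul_pow_mul_mem_leftBoosted (hF : IsMulFiltration F) (ht : t ∈ F 1)
    (htt : ∀ y, t * y * t = 0) {P N U V : S} (hN : N ∈ F 1) (hU : U ∈ F 3) (hV : V ∈ F 2)
    (h : P * N * P = t * P + U + V * P) (j : ℕ) :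
    (P * N) ^ j * P ∈ leftBoosted F t (2 * j) := by
  have hP : P ∈ leftBoosted F t 0 := hF.le_leftBoosted ht le_rfl (hF.mem_zero P)
  induction j using Nat.twoStepInduction with
  | zero => simpa using hP
  | one =>
    rw [pow_one, h]
    exact add_mem (add_mem (hF.left_mul_mem_leftBoosted htt hP)
      (hF.le_leftBoosted ht (by lia) hU)) (hF.mul_mem_leftBoosted (s := 0) hV hP)
  | more j ih₀ ih₁ =>
    have recursion : (P * N) ^ (j + 2) * P = t * ((P * N) ^ (j + 1) * P)
        + U * N * ((P * N) ^ j * P) + V * ((P * N) ^ (j + 1) * P) :=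
      calc (P * N) ^ (j + 2) * P = P * N * P * N * ((P * N) ^ j * P) := by
            simp only [pow_succ', mul_assoc]
        _ = _ := by rw [h]; simp only [pow_succ', add_mul, mul_assoc]
    have hUN : U * N ∈ F 4 := hF.mul_mem hU hN
    rw [recursion]
    refine add_mem (add_mem (hF.left_mul_mem_leftBoosted htt ih₁) ?_) ?_
    · convert hF.mul_mem_leftBoosted hUN ih₀ using 2; ring
    · convert hF.mul_mem_leftBoosted hV ih₁ using 2; ring

end IsMulFiltration

end Filtration

section Divisibility

variable {K S : Type*} [CommRing K] [Ring S] [Algebra K S] {D : ℕ → Submodule K S}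

theorem sum_pow_smul_pow_mul_mul_sub {f : K} {P B : S} (hPB : P * B = f • 1) (N : S) (k : ℕ) :
    (∑ j ∈ Finset.range (k + 1), f ^ (k - j) • ((P * N) ^ j * P)) * (B - N) =
      f ^ (k + 1) • 1 - (P * N) ^ (k + 1) := by
  have geom := (Algebra.commute_algebraMap_right f (P * N)).geom_sum₂_mul (k + 1)
  calc _ = -((∑ j ∈ Finset.range (k + 1), (P * N) ^ j * algebraMap K S f ^ (k + 1 - 1 - j)) *
            (P * N - algebraMap K S f)) := by
          rw [← mul_neg, neg_sub]
          simp only [Finset.sum_mul, smul_mul_assoc, mul_assoc _ P, mul_sub P, hPB,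
            Algebra.algebraMap_eq_smul_one, add_tsub_cancel_right, smul_pow, one_pow, mul_smul_one]
    _ = f ^ (k + 1) • 1 - (P * N) ^ (k + 1) := by
          rw [geom, neg_sub, ← map_pow, Algebra.algebraMap_eq_smul_one]

theorem IsMulFiltration.exists_mul_sub_eq_pow_smul_one (hD : IsMulFiltration D) {m : ℕ}
    (hm : ∀ b > m, D b = ⊥) {f : K} (hf : IsSMulRegular S f) {P B N t G V : S}
    (hPB : P * B = f • 1) (ht : t ∈ D 1) (htt : ∀ y, t * y * t = 0) (hN : N ∈ D 1) (hG : G ∈ D 1)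
    (hV : V ∈ D 2) (h : P * N * P = t * P + f • G + V * P) :
    ∃ Q : S, Q * (B - N) = f ^ ((m + 1) / 2 + 1) • 1 := by
  set F := weightedFiltration D f
  have hF : IsMulFiltration F := hD.weighted f
  have hDF : ∀ s, D s ≤ F s := le_weightedFiltration D f
  have hfG : f • G ∈ F 3 := by simpa using pow_smul_mem_weightedFiltration_add 1 (hDF 1 hG)
  set W : S := ∑ j ∈ Finset.range (m + 1), f ^ (m - j) • ((P * N) ^ j * P)
  have hWF : W ∈ F (2 * m - 1) := sum_mem fun j hj ↦ by
    have hj : j ≤ m := Finset.mem_range_succ_iff.mp hj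
    exact hF.antitone (by lia) <| pow_smul_mem_weightedFiltration_add (m - j) <|
      (hF.mul_pow_mul_mem_leftBoosted (hDF 1 ht) htt (hDF 1 hN) hfG (hDF 2 hV) h j).1
  have hPN : (P * N) ^ (m + 1) = 0 := by
    simpa [hm] using hD.pow_mem (hD.mul_mem_of_le (hD.mem_zero P) hN (by lia)) (m + 1)
  have hWB : W * (B - N) = f ^ (m + 1) • 1 := by
    rw [sum_pow_smul_pow_mul_mul_sub hPB, hPN, sub_zero]
  obtain ⟨Q, -, hQ : f ^ (m / 2) • Q = W⟩ := Submodule.mem_smul_pointwise_iff_exists _ _ _ |>.mp <|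
    weightedFiltration_le_pow_smul_top hm f (a := m / 2) (by lia) hWF
  refine ⟨Q, hf.pow (m / 2) ?_⟩
  calc f ^ (m / 2) • (Q * (B - N)) = f ^ (m + 1) • 1 := by rw [← smul_mul_assoc, hQ, hWB]
    _ = f ^ (m / 2) • f ^ ((m + 1) / 2 + 1) • 1 := by
      rw [smul_smul, ← pow_add]
      congr 2
      lia

end Divisibility

section Span

variable {K S : Type*} [CommSemiring K] [Semiring S] [Algebra K S]

theorem mul_mul_add_mul_mul_eq_zero {V : AddSubmonoid S} (hV : ∀ v ∈ V, ∀ y, v * y * v = 0)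
    {v w : S} (hv : v ∈ V) (hw : w ∈ V) (y : S) : v * y * w + w * y * v = 0 := by
  simpa [add_mul, mul_add, hV v hv, hV w hw, add_comm] using hV (v + w) (add_mem hv hw) y

theorem mul_mul_self_eq_zero_of_mem_span {V : AddSubmonoid S}
    (hV : ∀ v ∈ V, ∀ y, v * y * v = 0) {t : S} (ht : t ∈ Submodule.span K (V : Set S)) (y : S) :
    t * y * t = 0 := by
  have polar {x z : S} (hx : x ∈ Submodule.span K (V : Set S))
      (hz : z ∈ Submodule.span K (V : Set S)) : x * y * z + z * y * x = 0 := by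
    induction hx, hz using Submodule.span_induction₂ with
    | mem_mem x z hx hz => exact mul_mul_add_mul_mul_eq_zero hV hx hz y
    | zero_left | zero_right => simp
    | add_left x x' z _ _ _ h h' =>
      rw [add_mul, add_mul, mul_add, add_add_add_comm, h, h', add_zero]
    | add_right z x x' _ _ _ h h' =>
      rw [add_mul, add_mul, mul_add, add_add_add_comm, h, h', add_zero]
    | smul_left c x z _ _ h => simpa [← smul_add] using congrArg (c • ·) h
    | smul_right c x z _ _ h => simpa [← smul_add] using congrArg (c • ·) h
  induction ht using Submodule.span_induction with
  | mem v hv => exact hV v hv y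
  | zero => simp
  | add x z hx hz ihx ihz => simpa [add_mul, mul_add, ihx, ihz, add_comm] using polar hx hz
  | smul c x _ ih => simp [ih]

end Span

section Adjugate

open Polynomial

variable {ι K S : Type*} [Fintype ι] [DecidableEq ι] [CommRing K] [Ring S] [Algebra K S]

theorem exists_adjugate_mul_mul_adjugate (B M : Matrix ι ι K) :
    ∃ (d : K) (G : Matrix ι ι K),
      B.adjugate * M * B.adjugate = d • B.adjugate + B.det • G := by
  set L : Matrix ι ι K[X] := B.map C + (X : K[X]) • M.map C
  set p : (Matrix ι ι K)[X] := matPolyEquiv L.adjugate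
  have hL : matPolyEquiv L = C B + X * C M := by
    ext k i j
    rcases k with _ | k <;> simp [L]
  have hp₀ : p.coeff 0 = B.adjugate := by
    have eval_zero : constantCoeff.mapMatrix L = B := by ext; simp [L]
    ext i j
    rw [matPolyEquiv_coeff_apply, ← eval_zero, ← RingHom.map_adjugate]
    rfl
  have hp : p * (C B + X * C M) = L.det.map (algebraMap K _) := by
    rw [← hL, ← map_mul, Matrix.adjugate_mul, matPolyEquiv_smul_one]
  have linear_coeff : p.coeff 1 * B + B.adjugate * M = L.det.coeff 1 • 1 := by
    simpa [mul_add, ← mul_assoc, hp₀, Algebra.algebraMap_eq_smul_one] using congrArg (coeff · 1) hp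
  refine ⟨L.det.coeff 1, -p.coeff 1, ?_⟩
  rw [eq_sub_of_add_eq' linear_coeff, sub_mul, mul_assoc, Matrix.mul_adjugate]
  simp [sub_eq_add_neg]

theorem exists_map_adjugate_mul_mul_map_adjugate (φ : Matrix ι ι K →ₐ[K] S) (B : Matrix ι ι K)
    {V : Submodule K S} (hV : ∀ v ∈ V, ∀ M, Commute v (φ M)) {N : S}
    (hN : N ∈ V * φ.range.toSubmodule) :
    ∃ t ∈ V, ∃ G ∈ V * φ.range.toSubmodule,
      φ B.adjugate * N * φ B.adjugate = t * φ B.adjugate + B.det • G := by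
  induction hN using Submodule.mul_induction_on' with
  | mem_mul_mem v hv _ hM =>
    obtain ⟨M, rfl⟩ := hM
    obtain ⟨d, G, h⟩ := exists_adjugate_mul_mul_adjugate B M
    refine ⟨d • v, V.smul_mem d hv, v * φ G, Submodule.mul_mem_mul hv ⟨G, rfl⟩, ?_⟩
    calc φ B.adjugate * (v * φ M) * φ B.adjugate
        = v * φ (B.adjugate * M * B.adjugate) := by
          simp only [map_mul, ← mul_assoc, (hV v hv B.adjugate).eq]
      _ = _ := by simp [h, mul_add]
  | add N _ N' _ ih ih' =>
    obtain ⟨t, ht, G, hG, h⟩ := ih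
    obtain ⟨t', ht', G', hG', h'⟩ := ih'
    exact ⟨t + t', add_mem ht ht', G + G', add_mem hG hG', by
      simp only [mul_add, add_mul, h, h', smul_add]; abel⟩

theorem IsMulFiltration.exists_mul_map_sub_add_eq_det_pow_smul_one {D : ℕ → Submodule K S}
    (hD : IsMulFiltration D) {m : ℕ} (hm : ∀ b > m, D b = ⊥) (φ : Matrix ι ι K →ₐ[K] S)
    {B : Matrix ι ι K} (hB : IsSMulRegular S B.det) {V : Submodule K S} (hVD : V ≤ D 1)
    (hV : ∀ v ∈ V, ∀ y, v * y * v = 0) (hVφ : ∀ v ∈ V, ∀ M, Commute v (φ M)) {N₁ N₂ : S}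
    (hN₁ : N₁ ∈ V * φ.range.toSubmodule) (hN₂ : N₂ ∈ D 2) :
    ∃ Q : S, Q * (φ B - (N₁ + N₂)) = B.det ^ ((m + 1) / 2 + 1) • 1 := by
  have hVφD : V * φ.range.toSubmodule ≤ D 1 :=
    Submodule.mul_le.mpr fun v hv x _ ↦ hD.mul_mem (hVD hv) (hD.mem_zero x)
  obtain ⟨t, ht, G, hG, h⟩ := exists_map_adjugate_mul_mul_map_adjugate φ B hVφ hN₁
  refine hD.exists_mul_sub_eq_pow_smul_one hm hB (P := φ B.adjugate) (t := t) (G := G)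
    (V := φ B.adjugate * N₂) ?_ (hVD ht) (hV t ht) (add_mem (hVφD hN₁) (hD.antitone (by lia) hN₂))
    (hVφD hG) (hD.mul_mem_of_le (hD.mem_zero _) hN₂ (by lia)) ?_
  · rw [← map_mul, Matrix.adjugate_mul, map_smul, map_one]
  · rw [mul_add, add_mul, h]

end Adjugate

section Matrix

variable {R E : Type*} [CommSemiring R] [Semiring E] [Algebra R E]

/-- The matrices all of whose entries lie in `D`. -/
def matrixSubmodule (ι : Type*) (D : Submodule R E) : Submodule R (Matrix ι ι E) where
  carrier := (D : Set E).matrix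
  zero_mem' _ _ := D.zero_mem
  add_mem' hM hN i j := D.add_mem (hM i j) (hN i j)
  smul_mem' r _ hM i j := D.smul_mem r (hM i j)

@[simp]
theorem matrixSubmodule_bot (ι : Type*) : matrixSubmodule ι (⊥ : Submodule R E) = ⊥ := by
  ext M
  exact Matrix.ext_iff

theorem IsMulFiltration.matrix {ι : Type*} [Fintype ι] [DecidableEq ι] {D : ℕ → Submodule R E}
    (hD : IsMulFiltration D) : IsMulFiltration fun b ↦ matrixSubmodule ι (D b) where
  zero_eq_top := top_le_iff.mp fun _ _ _ _ ↦ hD.zero_eq_top ▸ Submodule.mem_top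
  antitone _ _ hab _ hM i j := hD.antitone hab (hM i j)
  mul_mem hM hN i j := sum_mem fun k _ ↦ hD.mul_mem (hM i k) (hN k j)

end Matrix

section Polynomial

open Polynomial

attribute [local instance] Polynomial.algebra

variable {R A : Type*} [CommSemiring R] [Semiring A] [Algebra R A]

/-- The polynomials all of whose coefficients lie in `D`. -/
noncomputable def polynomialSubmodule (D : Submodule R A) : Submodule R[X] A[X] where
  carrier := {p | ∀ k, p.coeff k ∈ D}
  zero_mem' := by simp
  add_mem' hp hq k := by simpa using add_mem (hp k) (hq k)
  smul_mem' r p hp k := by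
    rw [Algebra.smul_def, algebraMap_def, coe_mapRingHom, coeff_mul]
    exact sum_mem fun c _ ↦ by
      simpa [← Algebra.smul_def] using D.smul_mem _ (hp _)

@[simp]
theorem polynomialSubmodule_bot : polynomialSubmodule (⊥ : Submodule R A) = ⊥ := by
  ext p
  exact (Polynomial.ext_iff (q := 0)).symm

theorem IsMulFiltration.polynomial {D : ℕ → Submodule R A} (hD : IsMulFiltration D) :
    IsMulFiltration fun b ↦ polynomialSubmodule (D b) where
  zero_eq_top := top_le_iff.mp fun _ _ _ ↦ hD.zero_eq_top ▸ Submodule.mem_top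
  antitone _ _ hab _ hp k := hD.antitone hab (hp k)
  mul_mem hp hq k := by
    rw [coeff_mul]
    exact sum_mem fun c _ ↦ hD.mul_mem (hp c.1) (hq c.2)

theorem C_mem_polynomialSubmodule {D : Submodule R A} {x : A} (hx : x ∈ D) :
    C x ∈ polynomialSubmodule D := fun k ↦ by
  rw [coeff_C]
  split_ifs
  exacts [hx, D.zero_mem]

end Polynomial

section MatPoly

open Polynomial

attribute [local instance] Polynomial.algebra

variable (ι R E : Type*) [Fintype ι] [DecidableEq ι] [CommRing R] [Ring E] [Algebra R E]

/-- The composite `M_ι(R[X]) ≃ M_ι(R)[X] → M_ι(E)[X]` of `matPolyEquiv` with the structure map on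
coefficients. It carries adjugates over `R[X]` to polynomials with coefficients in the
noncommutative ring `M_ι(E)`. -/
noncomputable def matPolyMap : Matrix ι ι R[X] →ₐ[R[X]] (Matrix ι ι E)[X] where
  __ := (mapRingHom (algebraMap R E).mapMatrix).comp
    (matPolyEquiv : Matrix ι ι R[X] ≃ₐ[R] (Matrix ι ι R)[X]).toRingHom
  commutes' p := by
    ext k i j
    obtain rfl | hij := eq_or_ne i j <;> simp [Algebra.algebraMap_eq_smul_one, algebraMap_def, *]

variable {ι R}

@[simp]
theorem matPolyMap_coeff_apply (M : Matrix ι ι R[X]) (k : ℕ) (i j : ι) :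
    (matPolyMap ι R E M).coeff k i j = algebraMap R E ((M i j).coeff k) := by
  simp [matPolyMap]

theorem matPolyMap_charmatrix (M : Matrix ι ι R) :
    matPolyMap ι R E M.charmatrix = X - C (M.map (algebraMap R E)) := by
  simp [matPolyMap, Matrix.matPolyEquiv_charmatrix]

theorem matPolyMap_map_C (M : Matrix ι ι R) :
    matPolyMap ι R E (M.map C) = C (M.map (algebraMap R E)) := by
  simp [matPolyMap]

variable {E}

variable (ι) in
/-- The `R[X]`-combinations of the scalar matrices with diagonal entry in `W`. -/
noncomputable def scalarSpan (W : Submodule R E) : Submodule R[X] (Matrix ι ι E)[X] :=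
  Submodule.span R[X] (W.toAddSubmonoid.map (C.comp (Matrix.scalar ι)))

variable {W D : Submodule R E}

theorem scalarSpan_le (h : W ≤ D) : scalarSpan ι W ≤ polynomialSubmodule (matrixSubmodule ι D) := by
  refine Submodule.span_le.mpr ?_
  rintro _ ⟨v, hv, rfl⟩
  refine C_mem_polynomialSubmodule fun i j ↦ ?_
  obtain rfl | hij := eq_or_ne i j
  · simpa using h hv
  · simp [hij]

theorem mul_mul_self_eq_zero_of_mem_scalarSpan (hW : ∀ v ∈ W, ∀ y, v * y * v = 0)
    {t : (Matrix ι ι E)[X]} (ht : t ∈ scalarSpan ι W) (y : (Matrix ι ι E)[X]) : t * y * t = 0 := by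
  refine mul_mul_self_eq_zero_of_mem_span ?_ ht y
  rintro _ ⟨v, hv, rfl⟩ y
  ext k i j
  simp [hW v hv]

theorem commute_matPolyMap_of_mem_scalarSpan {t : (Matrix ι ι E)[X]} (ht : t ∈ scalarSpan ι W)
    (M : Matrix ι ι R[X]) : Commute t (matPolyMap ι R E M) := by
  induction ht using Submodule.span_induction with
  | mem _ hv =>
    obtain ⟨v, -, rfl⟩ := hv
    ext k i j
    simpa using (Algebra.commutes ((M i j).coeff k) v).symm
  | zero => exact Commute.zero_left _
  | add _ _ _ _ h h' => exact h.add_left h'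
  | smul c _ _ h => exact h.smul_left c

theorem C_mem_scalarSpan_mul_range {N : Matrix ι ι E} (hN : N ∈ matrixSubmodule ι W) :
    C N ∈ scalarSpan ι W * (matPolyMap ι R E).range.toSubmodule := by
  rw [Matrix.matrix_eq_sum_single N]
  simp only [map_sum]
  refine sum_mem fun i _ ↦ sum_mem fun j _ ↦ ?_
  have single_eq : C (Matrix.single i j (N i j)) =
      C (Matrix.scalar ι (N i j)) * matPolyMap ι R E ((Matrix.single i j 1).map C) := by
    rw [matPolyMap_map_C, ← C_mul]
    congr 1
    simp [← Matrix.smul_eq_diagonal_mul]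
  rw [single_eq]
  exact Submodule.mul_mem_mul (Submodule.subset_span ⟨_, hN i j, rfl⟩) ⟨_, rfl⟩

end MatPoly

section Graded

variable {R E : Type*}

section Semiring

variable [CommSemiring R] [Semiring E] [Algebra R E] (𝒜 : ℕ → Submodule R E)

/-- The elements all of whose homogeneous components have degree at least `b`. -/
def degreeGE (b : ℕ) : Submodule R E := ⨆ i ≥ b, 𝒜 i

variable {𝒜}

theorem le_degreeGE {b i : ℕ} (h : b ≤ i) : 𝒜 i ≤ degreeGE 𝒜 b := le_iSup₂_of_le i h le_rfl

theorem degreeGE_eq_bot {m b : ℕ} (hm : ∀ i > m, 𝒜 i = ⊥) (hb : m < b) : degreeGE 𝒜 b = ⊥ := by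
  simp only [degreeGE, iSup_eq_bot]
  exact fun i hi ↦ hm i (hb.trans_le hi)

variable (𝒜) [GradedAlgebra 𝒜]

theorem isMulFiltration_degreeGE : IsMulFiltration (degreeGE 𝒜) where
  zero_eq_top := by
    simpa only [degreeGE, ge_iff_le, zero_le, iSup_pos] using
      (DirectSum.Decomposition.isInternal 𝒜).submodule_iSup_eq_top
  antitone _ _ hab := biSup_mono fun _ hi ↦ hab.trans hi
  mul_mem {a b x y} hx hy := by
    have mul_le : degreeGE 𝒜 a * degreeGE 𝒜 b ≤ degreeGE 𝒜 (a + b) := by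
      rw [degreeGE, degreeGE]
      simp only [Submodule.iSup_mul, Submodule.mul_iSup, iSup_le_iff]
      exact fun j hj i hi ↦ Submodule.mul_le.mpr fun x hx y hy ↦
        le_degreeGE (add_le_add hi hj) (SetLike.mul_mem_graded hx hy)
    exact mul_le (Submodule.mul_mem_mul hx hy)

end Semiring

theorem sub_decompose_zero_add_decompose_one_mem_degreeGE [CommRing R] [Ring E] [Algebra R E]
    (𝒜 : ℕ → Submodule R E) [GradedAlgebra 𝒜] (x : E) :
    x - (DirectSum.decompose 𝒜 x 0 + DirectSum.decompose 𝒜 x 1) ∈ degreeGE 𝒜 2 := by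
  induction x using DirectSum.Decomposition.inductionOn 𝒜 with
  | zero => simp
  | add x y hx hy =>
    convert add_mem hx hy using 1
    simp only [DirectSum.decompose_add, DirectSum.add_apply, Submodule.coe_add]
    abel
  | @homogeneous i x =>
    match i with
    | 0 => simp [DirectSum.decompose_coe, DirectSum.of_apply]
    | 1 => simp [DirectSum.decompose_coe, DirectSum.of_apply]
    | i + 2 => simpa [DirectSum.decompose_coe, DirectSum.of_apply] using le_degreeGE (by lia) x.2

end Graded

section CayleyHamilton

open Polynomial

attribute [local instance] Polynomial.algebra

variable {ι R E : Type*} [Fintype ι] [DecidableEq ι] [CommRing R] [Ring E] [Algebra R E]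

theorem IsMulFiltration.exists_mul_X_sub_C_eq_charpoly_pow {D : ℕ → Submodule R E}
    (hD : IsMulFiltration D) {m : ℕ} (hm : ∀ b > m, D b = ⊥) {W : Submodule R E} (hWD : W ≤ D 1)
    (hW : ∀ v ∈ W, ∀ y, v * y * v = 0) (A₀ : Matrix ι ι R) {A₁ A₂ : Matrix ι ι E}
    (hA₁ : A₁ ∈ matrixSubmodule ι W) (hA₂ : A₂ ∈ matrixSubmodule ι (D 2)) :
    ∃ Q : (Matrix ι ι E)[X], Q * (X - C (A₀.map (algebraMap R E) + (A₁ + A₂))) =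
      (A₀.charpoly ^ ((m + 1) / 2 + 1)).map (algebraMap R (Matrix ι ι E)) := by
  have regular : IsSMulRegular (Matrix ι ι E)[X] A₀.charmatrix.det := fun p q h ↦ by
    refine (A₀.charpoly_monic.map (algebraMap R (Matrix ι ι E))).isRegular.left ?_
    simpa only [Algebra.smul_def, algebraMap_def, coe_mapRingHom] using! h
  obtain ⟨Q, hQ⟩ := hD.matrix.polynomial.exists_mul_map_sub_add_eq_det_pow_smul_one (m := m)
    (fun b hb ↦ by simp [hm b hb]) (matPolyMap ι R E) regular (scalarSpan_le hWD)
    (fun v hv ↦ mul_mul_self_eq_zero_of_mem_scalarSpan hW hv)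
    (fun v hv ↦ commute_matPolyMap_of_mem_scalarSpan hv) (C_mem_scalarSpan_mul_range hA₁)
    (C_mem_polynomialSubmodule hA₂)
  refine ⟨Q, ?_⟩
  rw [matPolyMap_charmatrix, sub_sub, ← C_add, ← C_add] at hQ
  rw [hQ, ← Algebra.algebraMap_eq_smul_one]
  rfl

theorem grassmann_cayley_hamilton_general (𝒜 : ℕ → Submodule R E) [GradedAlgebra 𝒜] {m : ℕ}
    (hm : ∀ i > m, 𝒜 i = ⊥) (h𝒜 : ∀ v ∈ 𝒜 1, ∀ y, v * y * v = 0) (A : Matrix ι ι E)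
    (A₀ : Matrix ι ι R)
    (hA₀ : ∀ i j, (DirectSum.decompose 𝒜 (A i j) 0 : E) = algebraMap R E (A₀ i j)) :
    aeval A A₀.charpoly ^ ((m + 1) / 2 + 1) = 0 := by
  set A₁ : Matrix ι ι E := A.map fun x ↦ DirectSum.decompose 𝒜 x 1
  set A₂ : Matrix ι ι E := A - (A₀.map (algebraMap R E) + A₁) with hA₂
  have hA₁_mem : A₁ ∈ matrixSubmodule ι (𝒜 1) := fun i j ↦ (DirectSum.decompose 𝒜 (A i j) 1).2
  have hA₂_mem : A₂ ∈ matrixSubmodule ι (degreeGE 𝒜 2) := fun i j ↦ by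
    simpa [A₂, A₁, ← hA₀] using sub_decompose_zero_add_decompose_one_mem_degreeGE 𝒜 (A i j)
  obtain ⟨Q, hQ⟩ := (isMulFiltration_degreeGE 𝒜).exists_mul_X_sub_C_eq_charpoly_pow
    (fun b hb ↦ degreeGE_eq_bot hm hb) (le_degreeGE le_rfl) h𝒜 A₀ hA₁_mem hA₂_mem
  have hA : A₀.map (algebraMap R E) + (A₁ + A₂) = A := by
    rw [hA₂]
    abel
  rw [hA] at hQ
  rw [← map_pow, aeval_def, ← eval_map, ← hQ, eval_mul_X_sub_C]

end CayleyHamilton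

section ExteriorAlgebra

open ExteriorAlgebra

variable {R M : Type*} [CommRing R] [AddCommGroup M] [Module R M]

theorem mul_mul_self_eq_zero_of_mem_exteriorPower_one {v : ExteriorAlgebra R M}
    (hv : v ∈ ⋀[R]^1 M) (y : ExteriorAlgebra R M) : v * y * v = 0 := by
  obtain ⟨w, rfl⟩ : ∃ w, ι R w = v := by simpa using hv
  induction y using CliffordAlgebra.left_induction with
  | algebraMap r => simp [mul_assoc, ← Algebra.commutes]
  | add x y hx hy => simp [mul_add, add_mul, hx, hy]
  | ι_mul x u hx =>
    calc ι R w * (ι R u * x) * ι R w = -(ι R u * (ι R w * x * ι R w)) := by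
          simp only [← mul_assoc, eq_neg_of_add_eq_zero_left (ι_add_mul_swap w u), neg_mul]
      _ = 0 := by rw [hx, mul_zero, neg_zero]

theorem exteriorPower_eq_bot_of_card_lt {κ : Type*} [Finite κ] {b : κ → M}
    (hb : Submodule.span R (Set.range b) = ⊤) {i : ℕ} (hi : Nat.card κ < i) : ⋀[R]^i M = ⊥ := by
  have : IsEmpty (Set.powersetCard κ i) :=
    Set.isEmpty_coe_sort.mpr (Set.powersetCard.eq_empty_iff.mpr hi)
  let : LinearOrder κ := IsWellOrder.linearOrder WellOrderingRel
  rw [← exteriorPower.ιMulti_family_span_fixedDegree_of_span R hb, Set.range_eq_empty,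
    Submodule.span_empty]

end ExteriorAlgebra

/-- **Cayley–Hamilton identity for matrices over the Grassmann algebra.**
Let `R` be a commutative ring and `E = ⋀ R^m` the Grassmann algebra of rank `m`.
If `A` is an `n × n` matrix over `E` and `A₀` is the matrix of degree-zero
homogeneous components of the entries of `A`, with characteristic polynomial
`f ∈ R[X]`, then `f(A) ^ (⌈m/2⌉ + 1) = 0`. -/
theorem grassmann_cayley_hamilton
    (R : Type*) [CommRing R] (m n : ℕ) (hn : 1 ≤ n)
    (A : Matrix (Fin n) (Fin n) (ExteriorAlgebra R (Fin m → R)))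
    (A₀ : Matrix (Fin n) (Fin n) R)
    (hA₀ : ∀ i j, (DirectSum.decompose (fun i : ℕ => ⋀[R]^i (Fin m → R)) (A i j) 0 :
        ExteriorAlgebra R (Fin m → R)) = algebraMap R _ (A₀ i j)) :
    (Polynomial.aeval A (Matrix.charpoly A₀)) ^ ((m + 1) / 2 + 1) = 0 := by
  exact grassmann_cayley_hamilton_general (fun i : ℕ => ⋀[R]^i (Fin m → R))
    (fun _ hi ↦ exteriorPower_eq_bot_of_card_lt (Pi.basisFun R (Fin m)).span_eq (by simpa using hi))
    (fun _ hv ↦ mul_mul_self_eq_zero_of_mem_exteriorPower_one hv) A A₀ hA₀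
end

section
/- Let R be a field of characteristic zero, or of prime characteristic p > ⌈m/2⌉. Let λ₁,…,λ_n ∈ R be pairwise distinct, let v = v₁v₂ + v₃v₄ + … + v_{2⌊m/2⌋−1} v_{2⌊m/2⌋} ∈ E^m (with the extra summand v_m added when m is odd), and let A = diag(λ₁ + v, …, λ_n + v) ∈ M_n E^m, so that the degree-zero component of A is A₀ = diag(λ₁,…,λ_n) with characteristic polynomial f(x) = ∏_{i=1}^n (x − λ_i). Then the minimal polynomial of A over R (as an element of the R-algebra M_n E^m) equals f(x)^(⌈m/2⌉+1). -/
/-!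
The vector `v` is a sum of `⌈m/2⌉` pairwise commuting elements of square zero, namely the products
`v₁v₂, v₃v₄, …` (and `v_m` if `m` is odd). For such a sum the multinomial theorem leaves only the
squarefree term: the top power is `⌈m/2⌉! • v₁v₂⋯v_m`, which the assumption on the characteristic
keeps away from zero, and the next power vanishes. Hence `λᵢ + v` has minimal polynomial
`(X - λᵢ) ^ (⌈m/2⌉ + 1)`. These polynomials are pairwise coprime, so the minimal polynomial of the
diagonal matrix is their product.
-/

open scoped Nat

section SquareZero

variable {A : Type*} [Semiring A]

theorem add_pow_succ_of_commute_of_mul_self_eq_zero {a s : A} (h : Commute a s) (ha : a * a = 0)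
    (n : ℕ) : (a + s) ^ (n + 1) = s ^ (n + 1) + (n + 1) • (a * s ^ n) := by
  induction n with
  | zero => simp [add_comm]
  | succ n ih =>
    have left : a * (a * s ^ n) = 0 := by rw [← mul_assoc, ha, zero_mul]
    have right : s * (a * s ^ n) = a * s ^ (n + 1) := by
      rw [← mul_assoc, ← h.eq, mul_assoc, ← pow_succ']
    calc (a + s) ^ (n + 2)
        = a * s ^ (n + 1) + s ^ (n + 2) +
            ((n + 1) • (a * (a * s ^ n)) + (n + 1) • (s * (a * s ^ n))) := by
          rw [pow_succ', ih, mul_add, add_mul, mul_smul_comm, add_mul, smul_add, ← pow_succ']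
      _ = s ^ (n + 2) + (n + 2) • (a * s ^ (n + 1)) := by
          rw [left, right, smul_zero, zero_add, succ_nsmul _ (n + 1)]
          abel

theorem list_sum_pow_length_succ_eq_zero {l : List A} (hcomm : l.Pairwise Commute)
    (hsq : ∀ a ∈ l, a * a = 0) : l.sum ^ (l.length + 1) = 0 := by
  induction l with
  | nil => simp
  | cons a l ih =>
    rw [List.pairwise_cons] at hcomm
    rw [List.forall_mem_cons] at hsq
    have ih := ih hcomm.2 hsq.2
    rw [List.sum_cons, List.length_cons,
      add_pow_succ_of_commute_of_mul_self_eq_zero (.list_sum_right _ _ hcomm.1) hsq.1, pow_succ, ih]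
    simp

theorem list_sum_pow_length {l : List A} (hcomm : l.Pairwise Commute)
    (hsq : ∀ a ∈ l, a * a = 0) : l.sum ^ l.length = l.length ! • l.prod := by
  induction l with
  | nil => simp
  | cons a l ih =>
    rw [List.pairwise_cons] at hcomm
    rw [List.forall_mem_cons] at hsq
    rw [List.sum_cons, List.length_cons,
      add_pow_succ_of_commute_of_mul_self_eq_zero (.list_sum_right _ _ hcomm.1) hsq.1,
      list_sum_pow_length_succ_eq_zero hcomm.2 hsq.2, ih hcomm.2 hsq.2, zero_add,
      mul_smul_comm, smul_smul, ← Nat.factorial_succ, List.prod_cons]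

end SquareZero

theorem commute_mul_of_anticommute {A : Type*} [Semigroup A] [HasDistribNeg A]
    {a b c : A} (hac : a * c = -(c * a)) (hbc : b * c = -(c * b)) : Commute (a * b) c := by
  rw [Commute, SemiconjBy, mul_assoc, hbc, mul_neg, ← mul_assoc, hac, neg_mul, neg_neg, mul_assoc]

/-- The list `[a₁ * a₂, a₃ * a₄, …]` of products of consecutive pairs of `[a₁, a₂, …]`, whose last
entry is the unpaired last entry of the given list if that list has odd length. For the
list of generators of `E^m`, its entries are the summands of `v`. -/
def consecutiveProducts {A : Type*} [Mul A] : List A → List A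
  | [] => []
  | [a] => [a]
  | a :: b :: l => a * b :: consecutiveProducts l

namespace consecutiveProducts

theorem length_eq {A : Type*} [Mul A] (l : List A) :
    (consecutiveProducts l).length = (l.length + 1) / 2 := by
  induction l using consecutiveProducts.induct with
  | case1 | case2 a => simp [consecutiveProducts]
  | case3 a b l ih =>
    simp only [consecutiveProducts, List.length_cons, ih]
    omega

theorem prod_eq {A : Type*} [Monoid A] (l : List A) : (consecutiveProducts l).prod = l.prod := by
  induction l using consecutiveProducts.induct with
  | case1 | case2 a => rfl
  | case3 a b l ih => simp only [consecutiveProducts, List.prod_cons, ih, mul_assoc]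

theorem sum_ofFn {A : Type*} [NonUnitalNonAssocSemiring A] : ∀ {m : ℕ} (f : Fin m → A),
    (consecutiveProducts (List.ofFn f)).sum =
      (∑ j : Fin (m / 2), f ⟨2 * j, by omega⟩ * f ⟨2 * j + 1, by omega⟩) +
        if h : m % 2 = 1 then f ⟨m - 1, Nat.sub_one_lt (by omega)⟩ else 0
  | 0, f => by simp [consecutiveProducts]
  | 1, f => by simp [consecutiveProducts]
  | m + 2, f => by
    have half : (m + 2) / 2 = m / 2 + 1 := by omega
    have parity : (m + 2) % 2 = m % 2 := by omega
    rw [List.ofFn_succ, List.ofFn_succ, consecutiveProducts, List.sum_cons, sum_ofFn,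
      ← (finCongr half).symm.sum_comp, Fin.sum_univ_succ, ← add_assoc]
    congr 1
    simp only [parity]
    split_ifs with h
    · have : m - 1 + 2 = m + 2 - 1 := by omega
      exact congrArg f (Fin.ext this)
    · rfl

theorem commute_of_mem {A : Type*} [Semigroup A] {c : A} {l : List A} (h : ∀ a ∈ l, Commute c a) :
    ∀ a ∈ consecutiveProducts l, Commute c a := by
  induction l using consecutiveProducts.induct with
  | case1 | case2 a => exact h
  | case3 a b l ih =>
    simp only [List.forall_mem_cons] at h
    exact List.forall_mem_cons.2 ⟨h.1.mul_right h.2.1, ih h.2.2⟩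

variable {A : Type*} [Ring A]

theorem pairwise_commute {l : List A} (hanti : l.Pairwise fun a b => a * b = -(b * a)) :
    (consecutiveProducts l).Pairwise Commute := by
  induction l using consecutiveProducts.induct with
  | case1 => exact .nil
  | case2 a => exact List.pairwise_singleton _ a
  | case3 a b l ih =>
    simp only [List.pairwise_cons, List.forall_mem_cons] at hanti
    obtain ⟨⟨-, ha⟩, hb, hl⟩ := hanti
    exact List.pairwise_cons.2
      ⟨commute_of_mem fun c hc => commute_mul_of_anticommute (ha c hc) (hb c hc), ih hl⟩

theorem mul_self_eq_zero_of_mem {l : List A} (hanti : l.Pairwise fun a b => a * b = -(b * a))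
    (hsq : ∀ a ∈ l, a * a = 0) : ∀ a ∈ consecutiveProducts l, a * a = 0 := by
  induction l using consecutiveProducts.induct with
  | case1 | case2 a => exact hsq
  | case3 a b l ih =>
    simp only [List.pairwise_cons, List.forall_mem_cons] at hanti hsq
    obtain ⟨⟨hab, -⟩, -, hl⟩ := hanti
    refine List.forall_mem_cons.2 ⟨?_, ih hl hsq.2.2⟩
    calc a * b * (a * b) = -(b * a) * (a * b) := by nth_rw 1 [hab]
      _ = -(b * (a * a) * b) := by simp only [neg_mul, mul_assoc]
      _ = 0 := by rw [hsq.1, mul_zero, zero_mul, neg_zero]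

theorem nilpotencyClass_sum {l : List A} (hanti : l.Pairwise fun a b => a * b = -(b * a))
    (hsq : ∀ a ∈ l, a * a = 0) (hprod : ((l.length + 1) / 2)! • l.prod ≠ 0) :
    nilpotencyClass (consecutiveProducts l).sum = (l.length + 1) / 2 + 1 := by
  have hcomm := pairwise_commute hanti
  have hsq := mul_self_eq_zero_of_mem hanti hsq
  rw [nilpotencyClass_eq_succ_iff, ← length_eq]
  refine ⟨list_sum_pow_length_succ_eq_zero hcomm hsq, ?_⟩
  rwa [list_sum_pow_length hcomm hsq, prod_eq, length_eq]

end consecutiveProducts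

section Exterior

open ExteriorAlgebra Module

variable {R M : Type*} [CommRing R] [AddCommGroup M] [Module R M] {m : ℕ}

theorem smul_ιMulti_basis_ne_zero (b : Basis (Fin m) R M) {r : R} (hr : r ≠ 0) :
    r • ιMulti R m b ≠ 0 := by
  intro h
  have hdet := congrArg (liftAlternating (Pi.single m b.det)) h
  rw [map_smul, liftAlternating_apply_ιMulti, Pi.single_eq_same, b.det_self, map_zero,
    smul_eq_mul, mul_one] at hdet
  exact hr hdet

theorem nilpotencyClass_sum_consecutiveProducts_ι_basis (b : Basis (Fin m) R M)
    (hm : (((m + 1) / 2)! : R) ≠ 0) :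
    nilpotencyClass (consecutiveProducts (List.ofFn fun i => ι R (b i))).sum = (m + 1) / 2 + 1 := by
  have hanti : (List.ofFn fun i => ι R (b i)).Pairwise fun x y => x * y = -(y * x) :=
    List.pairwise_ofFn.2 fun i j _ => eq_neg_of_add_eq_zero_left (ι_add_mul_swap _ _)
  have hsq : ∀ x ∈ List.ofFn fun i => ι R (b i), x * x = 0 :=
    List.forall_mem_ofFn_iff.2 fun i => ι_sq_zero (b i)
  have hprod : ((m + 1) / 2)! • (List.ofFn fun i => ι R (b i)).prod ≠ 0 := by
    rw [← ιMulti_apply, ← Nat.cast_smul_eq_nsmul R]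
    exact smul_ιMulti_basis_ne_zero b hm
  simpa using consecutiveProducts.nilpotencyClass_sum hanti hsq (by simpa using hprod)

end Exterior

section Minpoly

open Polynomial

theorem minpoly_diagonal {R A n : Type*} [CommRing R] [Ring A] [Algebra R A] [Fintype n]
    [DecidableEq n] (d : n → A) : minpoly R (Matrix.diagonal d) = minpoly R d :=
  minpoly.algHom_eq (Matrix.diagonalAlgHom R) Matrix.diagonal_injective d

variable {R : Type*} [Field R]

theorem minpoly_algebraMap_add_of_isNilpotent {A : Type*} [Ring A] [Algebra R A] (r : R) {x : A}
    (hx : IsNilpotent x) :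
    minpoly R (algebraMap R A r + x) = (X - C r) ^ nilpotencyClass x := by
  have aeval_pow (k : ℕ) : aeval (algebraMap R A r + x) ((X - C r) ^ k) = x ^ k := by simp
  have hmonic (k : ℕ) : ((X - C r) ^ k).Monic := (monic_X_sub_C r).pow k
  have hzero : aeval (algebraMap R A r + x) ((X - C r) ^ nilpotencyClass x) = 0 := by
    rw [aeval_pow, pow_nilpotencyClass hx]
  obtain ⟨k, hk, hassoc⟩ := (dvd_prime_pow (prime_X_sub_C r) _).1 (minpoly.dvd R _ hzero)
  have hminpoly : minpoly R (algebraMap R A r + x) = (X - C r) ^ k :=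
    eq_of_monic_of_associated (minpoly.monic ⟨_, hmonic _, hzero⟩) (hmonic k) hassoc
  have hpow : x ^ k = 0 := by rw [← aeval_pow, ← hminpoly, minpoly.aeval]
  rw [hminpoly, hk.antisymm (Nat.sInf_le hpow)]

theorem minpoly_pi_of_pairwise_isCoprime {ι : Type*} [Fintype ι] {A : ι → Type*} [∀ i, Ring (A i)]
    [∀ i, Algebra R (A i)] (x : ∀ i, A i)
    (hcop : Pairwise fun i j => IsCoprime (minpoly R (x i)) (minpoly R (x j))) :
    minpoly R x = ∏ i, minpoly R (x i) := by
  have hdvd : minpoly R x ∣ ∏ i, minpoly R (x i) := minpoly.dvd R x <| by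
    rw [aeval_pi_apply]
    exact funext fun i => aeval_eq_zero_of_dvd_aeval_eq_zero
      (Finset.dvd_prod_of_mem _ (Finset.mem_univ i)) (minpoly.aeval R (x i))
  have hdvd' : ∏ i, minpoly R (x i) ∣ minpoly R x :=
    Fintype.prod_dvd_of_coprime hcop fun i => minpoly.dvd R (x i) <| by
      rw [← aeval_pi_apply₂, minpoly.aeval, Pi.zero_apply]
  by_cases hx : IsIntegral R x
  · exact eq_of_monic_of_associated (minpoly.monic hx)
      (monic_prod_of_monic _ _ fun i _ => minpoly.monic (hx.map (Pi.evalAlgHom R A i)))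
      (associated_of_dvd_dvd hdvd hdvd')
  · rw [minpoly.eq_zero hx] at hdvd ⊢
    exact (zero_dvd_iff.1 hdvd).symm

theorem minpoly_diagonal_algebraMap_add_of_isNilpotent {A n : Type*} [Ring A] [Algebra R A]
    [Fintype n] [DecidableEq n] {r : n → R} (hr : Function.Injective r) {x : A}
    (hx : IsNilpotent x) :
    minpoly R (Matrix.diagonal fun i => algebraMap R A (r i) + x) =
      (∏ i, (X - C (r i))) ^ nilpotencyClass x := by
  rw [minpoly_diagonal, minpoly_pi_of_pairwise_isCoprime]
  · simp only [minpoly_algebraMap_add_of_isNilpotent _ hx, Finset.prod_pow]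
  · intro i j hij
    simp only [minpoly_algebraMap_add_of_isNilpotent _ hx]
    exact (pairwise_coprime_X_sub_C hr hij).pow

end Minpoly

theorem natCast_factorial_ne_zero {R : Type*} [AddMonoidWithOne R] {k : ℕ}
    (hchar : CharZero R ∨ ∃ p : ℕ, p.Prime ∧ CharP R p ∧ k < p) : (k ! : R) ≠ 0 := by
  rcases hchar with _ | ⟨p, hp, _, hk⟩
  · exact Nat.cast_ne_zero.2 k.factorial_ne_zero
  · rwa [Ne, CharP.cast_eq_zero_iff R p, hp.dvd_factorial, not_le]

open ExteriorAlgebra Polynomial in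
/-- Over a field of characteristic zero or of prime characteristic `p > ⌈m/2⌉`, for
distinct `λ₁, …, λₙ` and `v = v₁v₂ + ⋯ + v_{2⌊m/2⌋−1}v_{2⌊m/2⌋} (+ v_m if m odd)`, the
minimal polynomial of `A = diag(λ₁ + v, …, λₙ + v)` over `R` is `f^(⌈m/2⌉+1)`, where
`f = ∏ᵢ (X − λᵢ)` is the characteristic polynomial of `A₀ = diag(λ₁, …, λₙ)`. -/
theorem grassmann_minimal_polynomial
    (R : Type*) [Field R] (m n : ℕ)
    (hchar : CharZero R ∨ ∃ p : ℕ, p.Prime ∧ CharP R p ∧ (m + 1) / 2 < p)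
    (lam : Fin n → R) (hlam : Function.Injective lam)
    (v : ExteriorAlgebra R (Fin m → R))
    (hv : v = (∑ j : Fin (m / 2),
        ι R (Pi.single (⟨2 * j.val, by have := j.isLt; omega⟩ : Fin m) (1 : R)) *
          ι R (Pi.single (⟨2 * j.val + 1, by have := j.isLt; omega⟩ : Fin m) (1 : R))) +
      if h : m % 2 = 1 then ι R (Pi.single (⟨m - 1, by omega⟩ : Fin m) (1 : R)) else 0)
    (A : Matrix (Fin n) (Fin n) (ExteriorAlgebra R (Fin m → R)))
    (hA : A = Matrix.diagonal (fun i => algebraMap R _ (lam i) + v)) :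
    minpoly R A = (∏ i, (X - C (lam i))) ^ ((m + 1) / 2 + 1) := by
  have hsum : v = (consecutiveProducts (List.ofFn fun i => ι R (Pi.basisFun R (Fin m) i))).sum := by
    simp only [hv, consecutiveProducts.sum_ofFn, Pi.basisFun_apply]
  have hclass : nilpotencyClass v = (m + 1) / 2 + 1 := by
    rw [hsum, nilpotencyClass_sum_consecutiveProducts_ι_basis _ (natCast_factorial_ne_zero hchar)]
  have hnil : IsNilpotent v := isNilpotent_of_pos_nilpotencyClass (hclass ▸ Nat.succ_pos _)
  rw [hA, minpoly_diagonal_algebraMap_add_of_isNilpotent hlam hnil, hclass]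
end

section
/- Let a₁,…,a_k be elements of a (not necessarily commutative) ring, and let [k] = {1,…,k} = M ∪ N be a partition into two disjoint subsets. Suppose a_i and a_j anticommute (a_i a_j = −a_j a_i) whenever i ≠ j both lie in M, and commute (a_i a_j = a_j a_i) otherwise. Let 𝒫 be a partition of [k] into |N| classes, each class containing exactly one element of N, and let 𝔖 ⊆ 𝔖_k be the corresponding Young subgroup (all permutations leaving each class of 𝒫 invariant). If |M| is odd, then Σ_{π ∈ 𝔖} sign(π) · a_{π(1)} a_{π(2)} ⋯ a_{π(k)} = 0. -/
/-! Call the letters indexed by `M` odd and the others even, and let `T π` be the signed word of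
`π`. Exchanging two even letters negates `T`. Exchanging an even letter `j` with an odd letter `x`
multiplies the word by `(-1) ^ d`, where `d` is the number of odd letters in between, so the sum of
`T (swap j x * π)` over `x ∈ M ∪ {j}` is an alternating sum of `|M| + 1` copies of `± T π`; it
vanishes for `|M|` odd.

Fix an even `j` and add up these identities over the `π` in the Young subgroup that fix `j`. An odd
`x` outside the class of `j` contributes nothing: if `n` is an even letter in the class of `x`,
then replacing `π` by `swap x n * π` exchanges the even letters `j` and `n` in the word of
`swap j x * π`. If `j` is the only even letter of its class, the remaining `x` form that class and
the `swap j x` represent the cosets of the stabilizer of `j`. If it is not, exchanging `j` with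
another even letter of its class already cancels the whole sum. -/

open Equiv Finset

section Lists

variable {ι : Type*} {u v : ι} {l l₁ l₂ l₃ : List ι}

lemma exists_eq_append_of_mem_of_mem (huv : u ≠ v) (hu : u ∈ l) (hv : v ∈ l) :
    ∃ l₁ l₂ l₃, l = l₁ ++ u :: (l₂ ++ v :: l₃) ∨ l = l₁ ++ v :: (l₂ ++ u :: l₃) := by
  obtain ⟨s, t, rfl⟩ := List.append_of_mem hu
  rcases List.mem_append.1 hv with hvs | hvt
  · obtain ⟨p, q, rfl⟩ := List.append_of_mem hvs
    exact ⟨p, q, t, .inr (by simp)⟩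
  · obtain ⟨p, q, rfl⟩ := List.append_of_mem ((List.mem_cons.1 hvt).resolve_left huv.symm)
    exact ⟨s, p, q, .inl rfl⟩

lemma notMem_of_nodup_append (hl : (l₁ ++ u :: (l₂ ++ v :: l₃)).Nodup) :
    (u ∉ l₁ ∧ u ∉ l₂ ∧ u ∉ l₃) ∧ (v ∉ l₁ ∧ v ∉ l₂ ∧ v ∉ l₃) ∧ u ≠ v := by
  simp only [List.nodup_append, List.nodup_cons, List.mem_append, List.mem_cons] at hl
  grind

variable [DecidableEq ι]

lemma map_swap_of_notMem (hu : u ∉ l) (hv : v ∉ l) : l.map (swap u v) = l :=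
  (List.map_congr_left fun _ hx => swap_apply_of_ne_of_ne (ne_of_mem_of_not_mem hx hu)
    (ne_of_mem_of_not_mem hx hv)).trans (List.map_id' l)

lemma map_swap_append (hl : (l₁ ++ u :: (l₂ ++ v :: l₃)).Nodup) :
    (l₁ ++ u :: (l₂ ++ v :: l₃)).map (swap u v) = l₁ ++ v :: (l₂ ++ u :: l₃) := by
  obtain ⟨⟨hu₁, hu₂, hu₃⟩, ⟨hv₁, hv₂, hv₃⟩, -⟩ := notMem_of_nodup_append hl
  simp [map_swap_of_notMem, *]

lemma idxOf_filter_append {p : ι → Prop} [DecidablePred p]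
    (hl : (l₁ ++ u :: (l₂ ++ v :: l₃)).Nodup) (hu : p u) (hv : p v) :
    ((l₁ ++ u :: (l₂ ++ v :: l₃)).filter p).idxOf v =
      ((l₁ ++ u :: (l₂ ++ v :: l₃)).filter p).idxOf u + l₂.countP p + 1 := by
  obtain ⟨⟨hu₁, -⟩, ⟨hv₁, hv₂, -⟩, huv⟩ := notMem_of_nodup_append hl
  simp only [List.filter_append, hu, hv, decide_true, List.filter_cons_of_pos, List.mem_filter,
    and_true, hu₁, hv₁, hv₂, not_false_eq_true, List.idxOf_append_of_notMem, ne_eq, huv,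
    List.idxOf_cons_ne, List.idxOf_cons_self, List.countP_eq_length_filter]
  omega

lemma sum_neg_one_pow_idxOf {R : Type*} [Ring R] (hl : l.Nodup) (heven : Even l.length) :
    ∑ x ∈ l.toFinset, (-1 : R) ^ l.idxOf x = 0 := by
  have hmap : l.map (fun x => (-1 : R) ^ l.idxOf x) = (List.range l.length).map ((-1) ^ ·) :=
    List.ext_getElem (by simp) fun i hi _ => by simp [hl.idxOf_getElem]
  rw [List.sum_toFinset _ hl, hmap, ← List.sum_toFinset _ List.nodup_range, List.toFinset_range,
    neg_one_geom_sum, if_pos heven]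

lemma prod_map_swap_append {R A : Type*} [Monoid A] [SMul R A] [IsScalarTower R A A]
    [SMulCommClass R A A] {a : ι → A} {ε : R}
    (hl : (l₁ ++ u :: (l₂ ++ v :: l₃)).Nodup)
    (hε : a v * (l₂.map a).prod * a u = ε • (a u * (l₂.map a).prod * a v)) :
    (((l₁ ++ u :: (l₂ ++ v :: l₃)).map (swap u v)).map a).prod =
      ε • ((l₁ ++ u :: (l₂ ++ v :: l₃)).map a).prod := by
  have hprod (x y : ι) : ((l₁ ++ x :: (l₂ ++ y :: l₃)).map a).prod =
      (l₁.map a).prod * (a x * (l₂.map a).prod * a y) * (l₃.map a).prod := by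
    simp [mul_assoc]
  rw [map_swap_append hl, hprod, hprod, hε, mul_smul_comm, smul_mul_assoc]

end Lists

section Words

variable {ι A : Type*} [Ring A]

/-- The family `a` supercommutes when the indices in `M` are given odd parity and all others even
parity. No condition is put on the squares of the odd members. -/
structure IsSupercommuting (a : ι → A) (M : Finset ι) : Prop where
  anticomm : ∀ i ∈ M, ∀ j ∈ M, i ≠ j → a i * a j = -(a j * a i)
  comm : ∀ i j, i ∉ M ∨ j ∉ M → a i * a j = a j * a i

namespace IsSupercommuting

variable {a : ι → A} {M : Finset ι} {l : List ι} {j u v x : ι}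

lemma commute_prod (h : IsSupercommuting a M) (hj : j ∉ M) (l : List ι) :
    Commute (a j) (l.map a).prod :=
  Commute.list_prod_right _ _ (List.forall_mem_map.2 fun i _ => h.comm j i (.inl hj))

variable [DecidableEq ι]

lemma mul_prod_of_mem (h : IsSupercommuting a M) (hx : x ∈ M) (hxl : x ∉ l) :
    a x * (l.map a).prod = (-1 : ℤ) ^ l.countP (· ∈ M) • ((l.map a).prod * a x) := by
  induction l with
  | nil => simp
  | cons y l ih =>
    obtain ⟨hxy, hxl⟩ := not_or.1 (mt List.mem_cons.2 hxl)
    rw [List.map_cons, List.prod_cons, ← mul_assoc]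
    by_cases hy : y ∈ M
    · rw [h.anticomm x hx y hy hxy, neg_mul, mul_assoc, ih hxl,
        List.countP_cons_of_pos (by simpa using hy), pow_succ, mul_neg_one, neg_smul,
        mul_smul_comm, mul_assoc]
    · rw [h.comm x y (.inr hy), mul_assoc, ih hxl, List.countP_cons_of_neg (by simpa using hy),
        mul_smul_comm, mul_assoc]

lemma mul_prod_mul_of_mem_of_notMem (h : IsSupercommuting a M) (hx : x ∈ M) (hj : j ∉ M)
    (hxl : x ∉ l) :
    a x * (l.map a).prod * a j =
      (-1 : ℤ) ^ l.countP (· ∈ M) • (a j * (l.map a).prod * a x) := by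
  rw [h.mul_prod_of_mem hx hxl, smul_mul_assoc, mul_assoc, h.comm x j (.inr hj), ← mul_assoc,
    (h.commute_prod hj l).eq]

lemma mul_prod_mul_of_notMem_of_mem (h : IsSupercommuting a M) (hj : j ∉ M) (hx : x ∈ M)
    (hxl : x ∉ l) :
    a j * (l.map a).prod * a x =
      (-1 : ℤ) ^ l.countP (· ∈ M) • (a x * (l.map a).prod * a j) := by
  rw [h.mul_prod_mul_of_mem_of_notMem hx hj hxl, smul_smul, ← mul_pow, neg_one_mul, neg_neg,
    one_pow, one_smul]

lemma prod_map_swap_of_notMem_of_notMem (h : IsSupercommuting a M) (hl : l.Nodup)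
    (hul : u ∈ l) (hvl : v ∈ l) (huv : u ≠ v) (hu : u ∉ M) (hv : v ∉ M) :
    ((l.map (swap u v)).map a).prod = (l.map a).prod := by
  have hcomm {x y : ι} (hx : x ∉ M) (hy : y ∉ M) (w : List ι) :
      a y * (w.map a).prod * a x = (1 : ℤ) • (a x * (w.map a).prod * a y) := by
    rw [one_smul, (h.commute_prod hy w).eq, (h.commute_prod hx w).eq, mul_assoc, mul_assoc,
      h.comm x y (.inl hx)]
  rw [← one_smul ℤ (l.map a).prod]
  obtain ⟨l₁, l₂, l₃, rfl | rfl⟩ := exists_eq_append_of_mem_of_mem huv hul hvl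
  · exact prod_map_swap_append hl (hcomm hu hv l₂)
  · rw [swap_comm]
    exact prod_map_swap_append hl (hcomm hv hu l₂)

/-- Ranking the letters of `M ∪ {j}` by their order in `l` makes the number of odd letters between
`j` and `x` the difference of two ranks, less one. -/
lemma prod_map_swap_of_notMem_of_mem (h : IsSupercommuting a M) (hl : l.Nodup) (hjl : j ∈ l)
    (hxl : x ∈ l) (hj : j ∉ M) (hx : x ∈ M) :
    ((l.map (swap j x)).map a).prod =
      (-(-1) ^ (l.filter (· ∈ insert j M)).idxOf x *
        (-1) ^ (l.filter (· ∈ insert j M)).idxOf j : ℤ) • (l.map a).prod := by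
  have hcount {w : List ι} (hjw : j ∉ w) : w.countP (· ∈ insert j M) = w.countP (· ∈ M) :=
    List.countP_congr fun y hy => by simp [ne_of_mem_of_not_mem hy hjw]
  have hsign (m n : ℕ) : (-(-1) ^ (m + n + 1) * (-1) ^ m : ℤ) = (-1) ^ n := by
    rw [pow_succ, pow_add, mul_neg_one, neg_neg, mul_right_comm, ← mul_pow, neg_one_mul, neg_neg,
      one_pow, one_mul]
  obtain ⟨l₁, l₂, l₃, rfl | rfl⟩ :=
    exists_eq_append_of_mem_of_mem (ne_of_mem_of_not_mem hx hj).symm hjl hxl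
  · obtain ⟨⟨-, hj₂, -⟩, ⟨-, hx₂, -⟩, -⟩ := notMem_of_nodup_append hl
    rw [idxOf_filter_append hl (mem_insert_self j M) (mem_insert_of_mem hx), hsign, hcount hj₂]
    exact prod_map_swap_append hl (h.mul_prod_mul_of_mem_of_notMem hx hj hx₂)
  · obtain ⟨⟨-, hx₂, -⟩, ⟨-, hj₂, -⟩, -⟩ := notMem_of_nodup_append hl
    rw [idxOf_filter_append hl (mem_insert_of_mem hx) (mem_insert_self j M), neg_mul_comm,
      mul_comm, hsign, hcount hj₂, swap_comm]
    exact prod_map_swap_append hl (h.mul_prod_mul_of_notMem_of_mem hj hx hx₂)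

lemma sum_sign_smul_prod_map_swap [Fintype ι] (h : IsSupercommuting a M) (hl : l.Nodup)
    (hjl : j ∈ l) (hMl : ∀ x ∈ M, x ∈ l) (hj : j ∉ M) (hodd : Odd #M) :
    ∑ x ∈ insert j M, (Perm.sign (swap j x) : ℤ) • ((l.map (swap j x)).map a).prod = 0 := by
  set w := l.filter (· ∈ insert j M) with hw
  have hwset : w.toFinset = insert j M := by
    ext x
    simp only [hw, List.mem_toFinset, List.mem_filter, decide_eq_true_eq, and_iff_right_iff_imp]
    exact fun hx => (mem_insert.1 hx).elim (· ▸ hjl) (hMl x)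
  have hwlen : Even w.length := by
    rw [← List.toFinset_card_of_nodup (hl.filter _), hwset, card_insert_of_notMem hj]
    exact hodd.add_one
  have hterm : ∀ x ∈ insert j M, (Perm.sign (swap j x) : ℤ) • ((l.map (swap j x)).map a).prod =
      ((-1 : ℤ) ^ w.idxOf x * (-1) ^ w.idxOf j) • (l.map a).prod := by
    intro x hx
    rcases mem_insert.1 hx with rfl | hx
    · simp [← mul_pow]
    · rw [h.prod_map_swap_of_notMem_of_mem hl hjl (hMl x hx) hj hx,
        Perm.sign_swap (ne_of_mem_of_not_mem hx hj).symm, smul_smul]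
      simp [hw]
  rw [sum_congr rfl hterm, ← sum_smul, ← sum_mul, ← hwset,
    sum_neg_one_pow_idxOf (hl.filter _) hwlen, zero_mul, zero_smul]

end IsSupercommuting

end Words

section YoungSubgroup

variable {ι κ : Type*} {c : ι → κ}

/-- The Young subgroup of the partition of `ι` into the fibres of `c`. -/
def youngSubgroup (c : ι → κ) : Subgroup (Perm ι) where
  carrier := {π | ∀ i, c (π i) = c i}
  mul_mem' hσ hπ i := (hσ _).trans (hπ i)
  one_mem' _ := rfl
  inv_mem' {π} hπ i := by rw [← hπ, ← Perm.mul_apply, mul_inv_cancel, Perm.one_apply]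

lemma mem_youngSubgroup {π : Perm ι} : π ∈ youngSubgroup c ↔ ∀ i, c (π i) = c i := Iff.rfl

instance [Fintype ι] [DecidableEq κ] : DecidablePred (· ∈ youngSubgroup c) :=
  fun π => inferInstanceAs (Decidable (∀ i, c (π i) = c i))

variable [DecidableEq ι]

lemma swap_mem_youngSubgroup {u v : ι} (h : c u = c v) : swap u v ∈ youngSubgroup c := by
  intro i
  rw [swap_apply_def]
  split_ifs <;> simp_all

lemma sum_youngSubgroup_eq_sum_swap_mul [Fintype ι] [DecidableEq κ] {B : Type*}
    [AddCommMonoid B] (T : Perm ι → B) (j : ι) :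
    ∑ π with π ∈ youngSubgroup c, T π =
      ∑ x with c x = c j, ∑ π with π ∈ youngSubgroup c ∧ π j = j, T (swap j x * π) := by
  rw [← sum_product']
  refine sum_nbij' (fun σ => (σ j, swap j (σ j) * σ)) (fun p => swap j p.1 * p.2) ?_ ?_ ?_ ?_ ?_
  · intro σ hσ
    rw [mem_filter_univ] at hσ
    simp [hσ j, (youngSubgroup c).mul_mem (swap_mem_youngSubgroup (hσ j).symm) hσ]
  · rintro ⟨x, π⟩ hp
    simp only [mem_product, mem_filter_univ] at hp ⊢
    exact mul_mem (swap_mem_youngSubgroup hp.1.symm) hp.2.1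
  · simp
  · rintro ⟨x, π⟩ hp
    simp only [mem_product, mem_filter_univ] at hp
    simp [hp.2.2]
  · simp

variable {B : Type*} [AddCommGroup B] {T : Perm ι → B}

lemma sum_eq_zero_of_swap_mul {s : Finset (Perm ι)} {u v : ι} (huv : u ≠ v)
    (hs : ∀ π ∈ s, swap u v * π ∈ s) (hT : ∀ π ∈ s, T (swap u v * π) = -T π) :
    ∑ π ∈ s, T π = 0 :=
  sum_involution (fun π _ => swap u v * π) (fun π hπ => by rw [hT π hπ, add_neg_cancel])
    (fun _ _ _ h => huv (swap_eq_one_iff.1 (mul_eq_right.1 h))) hs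
    fun π _ => swap_mul_self_mul u v π

variable [Fintype ι] [DecidableEq κ] {M : Finset ι}

lemma sum_swap_mul_eq_zero_of_ne
    (hswap : ∀ u ∉ M, ∀ v ∉ M, u ≠ v → ∀ π, T (swap u v * π) = -T π) {j n x : ι}
    (hj : j ∉ M) (hn : n ∉ M) (hx : x ∈ M) (hnx : c n = c x) (hxj : c x ≠ c j) :
    ∑ π with π ∈ youngSubgroup c ∧ π j = j, T (swap j x * π) = 0 := by
  have hxn : x ≠ n := ne_of_mem_of_not_mem hx hn
  have hjx : j ≠ x := (ne_of_mem_of_not_mem hx hj).symm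
  have hjn : j ≠ n := fun h => hxj (hnx ▸ h ▸ rfl)
  have hconj (π : Perm ι) : swap j x * (swap x n * π) = swap j n * (swap j x * π) := by
    rw [← mul_assoc, ← mul_assoc, mul_swap_eq_swap_mul, swap_apply_right,
      swap_apply_of_ne_of_ne hjn.symm hxn.symm]
  refine sum_eq_zero_of_swap_mul (T := fun π => T (swap j x * π)) hxn (fun π hπ => ?_)
    fun π _ => by rw [hconj, hswap j hj n hn hjn]
  simp only [mem_filter_univ, Perm.mul_apply] at hπ ⊢
  refine ⟨mul_mem (swap_mem_youngSubgroup hnx.symm) hπ.1, ?_⟩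
  rw [hπ.2, swap_apply_of_ne_of_ne hjx hjn]

lemma sum_youngSubgroup_eq_zero_of_unique
    (hswap : ∀ u ∉ M, ∀ v ∉ M, u ≠ v → ∀ π, T (swap u v * π) = -T π) {j : ι} (hj : j ∉ M)
    (hsum : ∀ π, ∑ x ∈ insert j M, T (swap j x * π) = 0)
    (hc : ∀ i, ∃ n ∉ M, c n = c i) (hunique : ∀ u ∉ M, c u = c j → u = j) :
    ∑ π with π ∈ youngSubgroup c, T π = 0 := by
  have hsub : ({x | c x = c j} : Finset ι) ⊆ insert j M := fun x hx => by
    by_cases hxM : x ∈ M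
    · exact mem_insert_of_mem hxM
    · exact mem_insert.2 (.inl (hunique x hxM (mem_filter_univ x |>.1 hx)))
  calc ∑ π with π ∈ youngSubgroup c, T π
      = ∑ x with c x = c j, ∑ π with π ∈ youngSubgroup c ∧ π j = j, T (swap j x * π) :=
        sum_youngSubgroup_eq_sum_swap_mul T j
    _ = ∑ x ∈ insert j M, ∑ π with π ∈ youngSubgroup c ∧ π j = j, T (swap j x * π) := by
        refine sum_subset hsub fun x hx hxj => ?_
        replace hxj : c x ≠ c j := by simpa using hxj
        obtain ⟨n, hn, hnx⟩ := hc x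
        have hxM := (mem_insert.1 hx).resolve_left (ne_of_apply_ne c hxj)
        exact sum_swap_mul_eq_zero_of_ne hswap hj hn hxM hnx hxj
    _ = 0 := by rw [sum_comm, sum_eq_zero fun π _ => hsum π]

lemma sum_youngSubgroup_eq_zero
    (hswap : ∀ u ∉ M, ∀ v ∉ M, u ≠ v → ∀ π, T (swap u v * π) = -T π) {j : ι} (hj : j ∉ M)
    (hsum : ∀ π, ∑ x ∈ insert j M, T (swap j x * π) = 0) (hc : ∀ i, ∃ n ∉ M, c n = c i) :
    ∑ π with π ∈ youngSubgroup c, T π = 0 := by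
  by_cases hunique : ∀ u ∉ M, c u = c j → u = j
  · exact sum_youngSubgroup_eq_zero_of_unique hswap hj hsum hc hunique
  · push Not at hunique
    obtain ⟨u, hu, huj, hne⟩ := hunique
    refine sum_eq_zero_of_swap_mul hne (fun π hπ => ?_) fun π _ => hswap u hu j hj hne π
    rw [mem_filter_univ] at hπ ⊢
    exact mul_mem (swap_mem_youngSubgroup huj) hπ

end YoungSubgroup

theorem young_subgroup_signed_sum_eq_zero_general {ι κ A : Type*} [Fintype ι] [DecidableEq ι]
    [DecidableEq κ] [Ring A] {a : ι → A} {M : Finset ι} (h : IsSupercommuting a M)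
    {l : List ι} (hl : l.Nodup) (hmem : ∀ i, i ∈ l) {c : ι → κ} (hc : ∀ i, ∃ n ∉ M, c n = c i)
    (hodd : Odd #M) :
    ∑ π with π ∈ youngSubgroup c, (Perm.sign π : ℤ) • ((l.map π).map a).prod = 0 := by
  obtain ⟨m, -⟩ : M.Nonempty := card_pos.1 hodd.pos
  obtain ⟨j, hj, -⟩ := hc m
  have hnodup (π : Perm ι) : (l.map π).Nodup := hl.map π.injective
  have hmem_map (π : Perm ι) (i : ι) : i ∈ l.map π :=
    List.mem_map.2 ⟨π.symm i, hmem _, π.apply_symm_apply i⟩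
  have hmul (σ π : Perm ι) : (Perm.sign (σ * π) : ℤ) • ((l.map (σ * π)).map a).prod =
      (Perm.sign π : ℤ) • (Perm.sign σ : ℤ) • (((l.map π).map σ).map a).prod := by
    rw [Perm.sign_mul, Units.val_mul, mul_comm, mul_smul, Perm.coe_mul, ← List.map_map]
  refine sum_youngSubgroup_eq_zero (fun u hu v hv huv π => ?_) hj (fun π => ?_) hc
  · rw [hmul, h.prod_map_swap_of_notMem_of_notMem (hnodup π) (hmem_map π u) (hmem_map π v) huv hu
      hv, Perm.sign_swap huv, Units.val_neg, Units.val_one, neg_one_smul, smul_neg]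
  · simp only [hmul, ← smul_sum]
    rw [h.sum_sign_smul_prod_map_swap (hnodup π) (hmem_map π j) (fun x _ => hmem_map π x) hj
      hodd, smul_zero]

/-- Let `a₁, …, a_k` be ring elements, `{1,…,k} = M ⊔ N`, such that elements indexed by
distinct members of `M` anticommute and all other pairs commute. Let `c` assign to each
index the unique element of `N` lying in its class, for a partition of `{1,…,k}` whose
classes each contain exactly one element of `N`; the corresponding Young subgroup
consists of the permutations `π` with `c ∘ π = c`. If `|M|` is odd, then the signed sum
`Σ_π sign(π) a_{π(1)} ⋯ a_{π(k)}` over the Young subgroup vanishes. -/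
theorem young_subgroup_signed_sum_eq_zero
    (A : Type*) [Ring A] (k : ℕ) (a : Fin k → A)
    (M N : Finset (Fin k)) (hMN : Disjoint M N) (hMNuniv : M ∪ N = Finset.univ)
    (hanti : ∀ i ∈ M, ∀ j ∈ M, i ≠ j → a i * a j = -(a j * a i))
    (hcomm : ∀ i j : Fin k, i ∉ M ∨ j ∉ M → a i * a j = a j * a i)
    (c : Fin k → Fin k) (hcN : ∀ i, c i ∈ N) (hNfix : ∀ j ∈ N, c j = j)
    (hModd : Odd M.card) :
    ∑ π ∈ Finset.univ.filter (fun π : Equiv.Perm (Fin k) => ∀ i, c (π i) = c i),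
      (Equiv.Perm.sign π : ℤ) • (List.ofFn fun i => a (π i)).prod = 0 := by
  simpa only [mem_youngSubgroup, List.ofFn_eq_map, List.map_map, Function.comp_def] using
    young_subgroup_signed_sum_eq_zero_general ⟨hanti, hcomm⟩ (List.nodup_finRange k)
      List.mem_finRange (fun i => ⟨c i, disjoint_right.1 hMN (hcN i), hNfix _ (hcN i)⟩) hModd
end

section
/- Let a₁,…,a_k be elements of a (not necessarily commutative) ring, and let [k] = {1,…,k} = M ∪ N be a partition into two disjoint subsets. Suppose a_i and a_j anticommute (a_i a_j = −a_j a_i) whenever i ≠ j both lie in M, and commute (a_i a_j = a_j a_i) otherwise. Suppose 𝒫 is a partition of [k] into consecutive intervals of cardinalities m₁+1, …, m_{|N|}+1 with each m_r even, and suppose N consists exactly of the leftmost elements of these intervals (so M is the union of the remaining elements). Let 𝔖 ⊆ 𝔖_k be the Young subgroup corresponding to 𝒫. Then Σ_{π ∈ 𝔖} sign(π) · a_{π(1)} a_{π(2)} ⋯ a_{π(k)} = m₁! ⋯ m_{|N|}! · a₁ a₂ ⋯ a_k. -/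
/-!
Sorting `a_{π(1)} ⋯ a_{π(k)}` into `a₁ ⋯ a_k` only ever interchanges inverted pairs. If `π`
preserves the intervals, an inverted pair lies in a single interval, and its contribution to
`sign π` is cancelled by anticommutation unless its smaller member is the leftmost element of that
interval. Hence the term of `π` is `a₁ ⋯ a_k` times a factor `(-1)^p` for each interval, where `p`
is the position within the interval, counted from `0`, that its leftmost element takes. Summing
over `π` gives a product over the intervals; in an interval with `m + 1` elements every position
occurs for `m!` permutations, and the alternating sum over the positions is `1` if `m` is even and
`0` otherwise.
-/

open Finset

section InversionWeight

variable {ι R : Type*} [LinearOrder ι] [CommMonoid R]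

/-- The product of `w x y` over all inversions of the word `l`, that is, over all pairs in which
`x` occurs before `y` although `y < x`. It is the coefficient picked up when `l` is sorted and
`w x y` is the price of interchanging `x` and `y`. -/
def inversionWeight (w : ι → ι → R) : List ι → R
  | [] => 1
  | x :: l => (l.map fun y => if y < x then w x y else 1).prod * inversionWeight w l

theorem inversionWeight_ofFn (w : ι → ι → R) {n : ℕ} (f : Fin n → ι) :
    inversionWeight w (List.ofFn f) =
      ∏ i, ∏ j ∈ Ioi i, if f j < f i then w (f i) (f j) else 1 := by
  induction n with
  | zero => simp [inversionWeight]
  | succ n ih =>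
    rw [List.ofFn_succ, inversionWeight, ih, Fin.prod_univ_succ]
    simp only [Fin.prod_Ioi_zero, Fin.prod_Ioi_succ, List.map_ofFn, List.prod_ofFn,
      Function.comp_apply]

variable {A : Type*} [Monoid A] [MulAction R A] [IsScalarTower R A A] [SMulCommClass R A A]

theorem mul_prod_map_eq_smul_prod_map_orderedInsert (a : ι → A) (w : ι → ι → R) (x : ι)
    {l : List ι} (hl : l.Pairwise (· ≤ ·))
    (hw : ∀ y ∈ l, y < x → a x * a y = w x y • (a y * a x)) :
    a x * (l.map a).prod = (l.map fun y => if y < x then w x y else 1).prod •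
      ((l.orderedInsert (· ≤ ·) x).map a).prod := by
  induction l with
  | nil => simp
  | cons y l ih =>
    rcases le_or_gt x y with hxy | hyx
    · have hmin : ∀ z ∈ y :: l, ¬ z < x := by
        simpa [hxy] using fun z hz => hxy.trans (List.rel_of_pairwise_cons hl hz)
      rw [List.orderedInsert_cons_of_le _ _ hxy,
        List.map_congr_left fun z hz => if_neg (hmin z hz)]
      simp
    · have ih' := ih hl.of_cons fun z hz => hw z (List.mem_cons_of_mem y hz)
      rw [List.orderedInsert_of_not_le _ _ hyx.not_ge]
      simp only [List.map_cons, List.prod_cons, if_pos hyx]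
      calc a x * (a y * (l.map a).prod)
          = w x y • (a y * (a x * (l.map a).prod)) := by
            rw [← mul_assoc, hw y List.mem_cons_self hyx, smul_mul_assoc, mul_assoc]
        _ = (w x y * (l.map fun z => if z < x then w x z else 1).prod) •
              (a y * ((l.orderedInsert (· ≤ ·) x).map a).prod) := by
            rw [ih', mul_smul_comm, smul_smul]

theorem prod_map_eq_inversionWeight_smul_prod_map_insertionSort (a : ι → A) (w : ι → ι → R)
    {l : List ι}
    (hw : l.Pairwise fun x y => y < x → a x * a y = w x y • (a y * a x)) :
    (l.map a).prod = inversionWeight w l • ((l.insertionSort (· ≤ ·)).map a).prod := by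
  induction l with
  | nil => simp [inversionWeight]
  | cons x l ih =>
    obtain ⟨hx, hl⟩ := List.pairwise_cons.1 hw
    have hinsert := mul_prod_map_eq_smul_prod_map_orderedInsert a w x
      (List.pairwise_insertionSort (· ≤ ·) l)
      fun y hy => hx y ((List.mem_insertionSort (· ≤ ·)).1 hy)
    rw [((List.perm_insertionSort (· ≤ ·) l).map _).prod_eq] at hinsert
    rw [List.map_cons, List.prod_cons, ih hl, mul_smul_comm, hinsert, smul_smul, mul_comm]
    rfl

theorem insertionSort_ofFn_perm {n : ℕ} (π : Equiv.Perm (Fin n)) :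
    (List.ofFn π).insertionSort (· ≤ ·) = List.ofFn id :=
  ((List.perm_insertionSort _ _).trans (π.ofFn_comp_perm id)).eq_of_sortedLE
    List.sortedLE_insertionSort (List.sortedLE_ofFn_iff.2 monotone_id)

theorem prod_ofFn_perm_eq_smul_prod_ofFn {n : ℕ} (a : Fin n → A) (w : Fin n → Fin n → R)
    (π : Equiv.Perm (Fin n))
    (hw : ∀ i j, i < j → π j < π i →
      a (π i) * a (π j) = w (π i) (π j) • (a (π j) * a (π i))) :
    (List.ofFn fun i => a (π i)).prod =
      (∏ i, ∏ j ∈ Ioi i, if π j < π i then w (π i) (π j) else 1) • (List.ofFn a).prod := by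
  have h := prod_map_eq_inversionWeight_smul_prod_map_insertionSort a w
    (List.pairwise_ofFn.2 fun i j => hw i j)
  rwa [insertionSort_ofFn_perm, List.map_ofFn, List.map_ofFn, inversionWeight_ofFn] at h

end InversionWeight

theorem sign_smul_prod_ofFn_perm {A : Type*} [Ring A] {n : ℕ} (a : Fin n → A)
    (w : Fin n → Fin n → ℤ) (π : Equiv.Perm (Fin n))
    (hw : ∀ i j, i < j → π j < π i →
      a (π i) * a (π j) = -(w (π i) (π j) • (a (π j) * a (π i)))) :
    (Equiv.Perm.sign π : ℤ) • (List.ofFn fun i => a (π i)).prod =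
      (∏ i, ∏ j ∈ Ioi i, if π j < π i then w (π i) (π j) else 1) • (List.ofFn a).prod := by
  rw [prod_ofFn_perm_eq_smul_prod_ofFn a (-w) π (by simpa using hw), smul_smul,
    Equiv.Perm.sign_eq_prod_prod_Ioi]
  push_cast
  congr 1
  rw [← prod_mul_distrib]
  refine prod_congr rfl fun i _ => ?_
  rw [← prod_mul_distrib]
  refine prod_congr rfl fun j hj => ?_
  have hne : π i ≠ π j := π.injective.ne (mem_Ioi.1 hj).ne
  rcases hne.lt_or_gt with h | h <;> simp [h, h.not_gt]

section Permanent

theorem sum_perm_apply {α M : Type*} [Fintype α] [DecidableEq α] [AddCommMonoid M] (f : α → M)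
    (x : α) :
    ∑ σ : Equiv.Perm α, f (σ x) = (Fintype.card α - 1).factorial • ∑ y, f y := by
  let e := Equiv.optionSubtypeNe x
  have hcard : Fintype.card {y // y ≠ x} = Fintype.card α - 1 := by simp
  calc ∑ σ : Equiv.Perm α, f (σ x)
      = ∑ τ : Equiv.Perm (Option {y // y ≠ x}), f (e (τ none)) := by
        simp [← e.permCongr.sum_comp, e, Equiv.permCongr_apply]
    _ = ∑ p : Option {y // y ≠ x} × Equiv.Perm {y // y ≠ x}, f (e p.1) := by
        simp [← Equiv.Perm.decomposeOption.symm.sum_comp]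
    _ = (Fintype.card α - 1).factorial • ∑ y, f y := by
        simp only [Fintype.sum_prod_type, sum_const, card_univ, Fintype.card_perm, hcard,
          ← smul_sum, e.sum_comp]

theorem permanent_updateRow_one {α R : Type*} [Fintype α] [DecidableEq α] [CommSemiring R]
    (x : α) (c : α → R) :
    (Matrix.updateRow (Matrix.of fun _ _ => 1) x c).permanent =
      (Fintype.card α - 1).factorial • ∑ y, c y := by
  have hterm (σ : Equiv.Perm α) :
      ∏ i, Matrix.updateRow (Matrix.of fun _ _ => 1) x c (σ i) i = c (σ⁻¹ x) := by
    rw [← Equiv.prod_comp σ⁻¹]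
    simp [Matrix.updateRow_apply]
  simp only [Matrix.permanent, hterm]
  rw [← sum_perm_apply c x]
  exact Equiv.sum_comp (Equiv.inv (Equiv.Perm α)) fun σ : Equiv.Perm α => c (σ x)

theorem sum_young_prod_eq_prod_permanent {α β R : Type*} [Fintype α] [DecidableEq α] [Fintype β]
    [DecidableEq β] [CommSemiring R] (g : α → β)
    [DecidablePred fun π : Equiv.Perm α => ∀ i, g (π i) = g i] (C : Matrix α α R) :
    ∑ π : Equiv.Perm α with ∀ i, g (π i) = g i, ∏ i, C (π i) i =
      ∏ r, (C.toSquareBlock g r).permanent := by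
  simp only [Matrix.permanent, prod_univ_sum, Fintype.piFinset_univ]
  refine sum_bij' (fun π hπ r => π.subtypePerm fun i => by rw [(mem_filter.1 hπ).2 i])
    (fun σ _ => DomMulAct.stabilizerEquiv_invFun_aux σ) (fun _ _ => mem_univ _)
    (fun σ _ => mem_filter.2 ⟨mem_univ _, DomMulAct.comp_stabilizerEquiv_invFun σ⟩)
    (fun _ _ => rfl) (fun σ _ => ?_) (fun π _ => ?_)
  · ext r i
    exact DomMulAct.stabilizerEquiv_invFun_eq σ i.2
  · exact (Fintype.prod_fiberwise g fun i => C (π i) i).symm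

end Permanent

theorem sum_neg_one_pow_card_filter_lt {ι : Type*} [LinearOrder ι] (s : Finset ι) :
    ∑ j ∈ s, (-1 : ℤ) ^ #{i ∈ s | i < j} = if Even #s then 0 else 1 := by
  induction s using Finset.induction_on_max with
  | empty => simp
  | insert b s hb ih =>
    have hbs : b ∉ s := fun h => (hb b h).false
    have hrank : ∀ j ∈ s, #{i ∈ insert b s | i < j} = #{i ∈ s | i < j} := fun j hj => by
      rw [filter_insert, if_neg (hb j hj).not_gt]
    have hrank_b : #{i ∈ insert b s | i < b} = #s := by
      rw [filter_insert, if_neg (lt_irrefl b), filter_true_of_mem hb]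
    rw [sum_insert hbs, hrank_b, sum_congr rfl fun j hj => by rw [hrank j hj], ih,
      card_insert_of_notMem hbs]
    by_cases h : Even #s <;> simp [h, Nat.even_add_one, Odd.neg_one_pow, Nat.not_even_iff_odd.1]

section Blocks

variable {ι β : Type*} [LinearOrder ι]

theorem eq_of_ordConnected_fibers_of_lt_of_le {g : ι → β} (hg : ∀ r, (g ⁻¹' {r}).OrdConnected)
    {i j x y : ι} (hij : i < j) (hyx : y ≤ x) (hx : g x = g i) (hy : g y = g j) : g i = g j := by
  rcases le_total j x with hjx | hxj
  · exact ((hg (g i)).out rfl hx ⟨hij.le, hjx⟩).symm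
  · exact hx.symm.trans ((hg (g j)).out hy rfl ⟨hyx, hxj⟩)

variable [Fintype ι] [DecidableEq β]

/-- The signs for placing `y` at position `j`: rows `y ∈ N` alternate along each fiber of `g`, the
other rows are constantly `1`. Indexed like `Matrix.permanent`, so that a permutation `π` picks the
entries `(π j, j)`. -/
def rankSignMatrix (g : ι → β) (N : Finset ι) : Matrix ι ι ℤ :=
  Matrix.of fun y j => if y ∈ N then (-1) ^ #{i | g i = g j ∧ i < j} else 1

theorem permanent_toSquareBlock_rankSignMatrix {g : ι → β} {N : Finset ι}
    (hN : ∀ i, i ∈ N ↔ IsLeast (g ⁻¹' {g i}) i) {r : β} {m : ℕ} (hr : #{i | g i = r} = m + 1) :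
    ((rankSignMatrix g N).toSquareBlock g r).permanent =
      if Even m then (m.factorial : ℤ) else 0 := by
  obtain ⟨b, hb⟩ : ∃ b, IsLeast (g ⁻¹' {r}) b := by
    have hne : ({i | g i = r} : Finset ι).Nonempty := card_pos.1 (by lia)
    exact ⟨_, by simpa using! isLeast_min' _ hne⟩
  let c : {i // g i = r} → ℤ := fun j => (-1) ^ #{i | g i = r ∧ i < j}
  have hblock : (rankSignMatrix g N).toSquareBlock g r =
      Matrix.updateRow (Matrix.of fun _ _ => 1) ⟨b, hb.1⟩ c := by
    ext y j
    have hy : (y : ι) ∈ N ↔ y = ⟨b, hb.1⟩ := by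
      rw [hN, y.2, Subtype.ext_iff]
      exact ⟨fun h => h.unique hb, fun h => h ▸ hb⟩
    simp [Matrix.toSquareBlock_def, rankSignMatrix, Matrix.updateRow_apply, hy, j.2, c]
  have hsum : ∑ j, c j = if Even m then 1 else 0 := by
    have h := sum_neg_one_pow_card_filter_lt ({i | g i = r} : Finset ι)
    simp only [filter_filter, hr, Nat.even_add_one, ite_not] at h
    rw [← h]
    exact (sum_subtype _ (by simp) fun j => (-1 : ℤ) ^ #{i | g i = r ∧ i < j}).symm
  rw [hblock, permanent_updateRow_one, hsum, Fintype.card_subtype, hr]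
  simp

end Blocks

section Young

variable {β : Type*} [DecidableEq β] {k : ℕ} {g : Fin k → β} {N : Finset (Fin k)}

theorem prod_inversions_eq_prod_rankSignMatrix (hg : ∀ r, (g ⁻¹' {r}).OrdConnected)
    (hN : ∀ i, i ∈ N ↔ IsLeast (g ⁻¹' {g i}) i) {π : Equiv.Perm (Fin k)}
    (hπ : ∀ i, g (π i) = g i) :
    (∏ i, ∏ j ∈ Ioi i, if π j < π i then if π j ∈ N then -1 else 1 else 1) =
      ∏ j, rankSignMatrix g N (π j) j := by
  have hinv : ∀ j, π j ∈ N → ∀ i < j, (π j < π i ↔ g i = g j) := fun j hj i hij => by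
    refine ⟨fun hlt => eq_of_ordConnected_fibers_of_lt_of_le hg hij hlt.le (hπ i) (hπ j),
      fun hblock => ?_⟩
    have hle : π j ≤ π i := ((hN _).1 hj).2 (by simp [hπ, hblock])
    exact hle.lt_of_ne (π.injective.ne hij.ne')
  rw [prod_comm' (t' := univ) (s' := fun j => Iio j) (by simp)]
  refine prod_congr rfl fun j _ => ?_
  by_cases hj : π j ∈ N
  · have hfilter : (Iio j).filter (g · = g j) = ({i | g i = g j ∧ i < j} : Finset (Fin k)) := by
      ext i
      simp [and_comm]
    calc (∏ i ∈ Iio j, if π j < π i then if π j ∈ N then -1 else 1 else 1)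
        = ∏ i ∈ Iio j, if g i = g j then (-1 : ℤ) else 1 :=
          prod_congr rfl fun i hi => by simp [hj, hinv j hj i (mem_Iio.1 hi)]
      _ = rankSignMatrix g N (π j) j := by simp [rankSignMatrix, hj, prod_ite, hfilter]
  · simp [rankSignMatrix, hj]

theorem sign_smul_prod_ofFn_young {A : Type*} [Ring A] {a : Fin k → A}
    (hg : ∀ r, (g ⁻¹' {r}).OrdConnected)
    (hN : ∀ i, i ∈ N ↔ IsLeast (g ⁻¹' {g i}) i)
    (hanti : ∀ i ∉ N, ∀ j ∉ N, g i = g j → i ≠ j → a i * a j = -(a j * a i))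
    (hcomm : ∀ i, ∀ j ∈ N, g i = g j → a i * a j = a j * a i)
    {π : Equiv.Perm (Fin k)} (hπ : ∀ i, g (π i) = g i) :
    (Equiv.Perm.sign π : ℤ) • (List.ofFn fun i => a (π i)).prod =
      (∏ j, rankSignMatrix g N (π j) j) • (List.ofFn a).prod := by
  rw [← prod_inversions_eq_prod_rankSignMatrix hg hN hπ]
  refine sign_smul_prod_ofFn_perm a (fun _ y => if y ∈ N then -1 else 1) π fun i j hij hlt => ?_
  have hblock : g (π i) = g (π j) := by
    rw [hπ, hπ]
    exact eq_of_ordConnected_fibers_of_lt_of_le hg hij hlt.le (hπ i) (hπ j)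
  have hi : π i ∉ N := fun h => hlt.not_ge (((hN _).1 h).2 hblock.symm)
  by_cases hj : π j ∈ N
  · simp [hj, hcomm (π i) (π j) hj hblock]
  · simp [hj, hanti (π i) hi (π j) hj hblock hlt.ne']

end Young

theorem young_subgroup_signed_sum_intervals_general {A β : Type*} [Ring A] [Fintype β]
    [DecidableEq β] {k : ℕ} (a : Fin k → A) (g : Fin k → β)
    (hg : ∀ r, (g ⁻¹' {r}).OrdConnected) (m : β → ℕ) (hm : ∀ r, #{i | g i = r} = m r + 1)
    (N : Finset (Fin k)) (hN : ∀ i, i ∈ N ↔ IsLeast (g ⁻¹' {g i}) i)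
    (hanti : ∀ i ∉ N, ∀ j ∉ N, g i = g j → i ≠ j → a i * a j = -(a j * a i))
    (hcomm : ∀ i, ∀ j ∈ N, g i = g j → a i * a j = a j * a i) :
    ∑ π : Equiv.Perm (Fin k) with ∀ i, g (π i) = g i,
      (Equiv.Perm.sign π : ℤ) • (List.ofFn fun i => a (π i)).prod =
    (∏ r, if Even (m r) then (m r).factorial else 0) • (List.ofFn a).prod := by
  calc _ = ∑ π : Equiv.Perm (Fin k) with ∀ i, g (π i) = g i,
        (∏ j, rankSignMatrix g N (π j) j) • (List.ofFn a).prod :=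
      sum_congr rfl fun π hπ => sign_smul_prod_ofFn_young hg hN hanti hcomm (mem_filter.1 hπ).2
    _ = (∏ r, if Even (m r) then ((m r).factorial : ℤ) else 0) • (List.ofFn a).prod := by
      rw [← sum_smul, sum_young_prod_eq_prod_permanent]
      simp only [permanent_toSquareBlock_rankSignMatrix hN (hm _)]
    _ = _ := by
      rw [← natCast_zsmul]
      simp only [Nat.cast_prod, Nat.cast_ite, Nat.cast_zero]

/-- Let `a₁, …, a_k` be ring elements and let `{1,…,k}` be partitioned into consecutive
intervals (the fibers of a monotone map `g`) of cardinalities `m₁+1, …, m_t+1` with each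
`m_r` even. Let `N` consist of the leftmost elements of the intervals and `M` of the
remaining elements; suppose elements indexed by distinct members of `M` anticommute and
all other pairs commute. Then the signed sum `Σ_π sign(π) a_{π(1)} ⋯ a_{π(k)}` over the
Young subgroup of the partition equals `m₁! ⋯ m_t! ⋅ a₁ ⋯ a_k`. -/
theorem young_subgroup_signed_sum_intervals
    (A : Type*) [Ring A] (k t : ℕ) (a : Fin k → A)
    (msz : Fin t → ℕ) (hmsz : ∀ r, Even (msz r))
    (g : Fin k → Fin t) (hgmono : Monotone g)
    (hcard : ∀ r, (Finset.univ.filter fun i => g i = r).card = msz r + 1)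
    (N M : Finset (Fin k))
    (hN : N = Finset.univ.filter fun i => ∀ j, g j = g i → i ≤ j)
    (hM : M = Nᶜ)
    (hanti : ∀ i ∈ M, ∀ j ∈ M, i ≠ j → a i * a j = -(a j * a i))
    (hcomm : ∀ i j : Fin k, i ∉ M ∨ j ∉ M → a i * a j = a j * a i) :
    ∑ π ∈ Finset.univ.filter (fun π : Equiv.Perm (Fin k) => ∀ i, g (π i) = g i),
      (Equiv.Perm.sign π : ℤ) • (List.ofFn fun i => a (π i)).prod =
    (∏ r, (msz r).factorial) • (List.ofFn a).prod := by
  have hNleast : ∀ i, i ∈ N ↔ IsLeast (g ⁻¹' {g i}) i := by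
    simp [hN, IsLeast, mem_lowerBounds]
  simpa only [hmsz, if_true] using young_subgroup_signed_sum_intervals_general a g
    (fun r => Set.ordConnected_singleton.preimage_mono hgmono) msz hcard N hNleast
    (fun i hi j hj _ => hanti i (by simpa [hM]) j (by simpa [hM]))
    (fun i j hj _ => hcomm i j (.inr (by simpa [hM])))
end

section
/- Let R be a commutative ring, m ≥ 0 and n ≥ 1. Then the ring M_n E^m of n×n matrices over the Grassmann algebra E^m satisfies the Capelli identity of x-degree k = n² + 2⌊m/2⌋ + 1; that is, for all A₁,…,A_k, B₀,…,B_k ∈ M_n E^m, Σ_{π ∈ 𝔖_k} sign(π) · B₀ A_{π(1)} B₁ A_{π(2)} B₂ ⋯ B_{k−1} A_{π(k)} B_k = 0. -/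
/-!
Let `E` be an algebra over a commutative ring `C`, all of whose commutators come from an ideal `I`
of `C`. Adjoin anticommuting variables `θ₁, …, θₖ` that commute with `E`. The Capelli polynomial is
then the coefficient of `θ₁ ⋯ θₖ` in `B₀ X B₁ X ⋯ X Bₖ`, where `X = ∑ θᵢ Aᵢ` has `n²` entries.
Because the `θᵢ` anticommute, the *anticommutators* of these entries involve only *commutators* of
`E`, so they are central and divisible by `I`. Hence a word of length `l` in the entries of `X` can
be reordered until two equal letters meet, and `⌊(l + 1 - n²) / 2⌋` times in a row a pair of letters
is traded for a factor from `I`. Moving an entry of `X` leftwards past a coefficient costs at most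
one letter per factor from `I`, which is even better; so the Capelli polynomial of `x`-degree `k`
takes values in `I ^ ⌊(k + 1 - n²) / 2⌋ Mₙ(E)`.

For an exterior algebra, take for `C` the center and for `I` the ideal generated by the products of
two vectors. Its `r`-th power vanishes as soon as `2r` exceeds the rank.
-/

theorem exists_eq_append_of_not_nodup {S : Type*} {l : List S} (h : ¬ l.Nodup) :
    ∃ s u v t, l = u ++ s :: (v ++ s :: t) := by
  obtain ⟨s, hs⟩ := List.exists_duplicate_iff_not_nodup.mpr h
  obtain ⟨l₁, l₂, rfl, hs₁, hs₂⟩ := List.cons_sublist_iff.mp (List.duplicate_iff_sublist.mp hs)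
  obtain ⟨u, v₁, rfl⟩ := List.append_of_mem hs₁
  obtain ⟨v₂, t, rfl⟩ := List.append_of_mem (List.singleton_sublist.mp hs₂)
  exact ⟨s, u, v₁ ++ v₂, t, by simp⟩

section Words

variable {C W S : Type*} [CommRing C] [Ring W] [Algebra C W] {I : Ideal C}

theorem mul_left_mem_smul_top (a : W) {b : W} (hb : b ∈ I • (⊤ : Submodule C W)) :
    a * b ∈ I • (⊤ : Submodule C W) :=
  Submodule.smul_top_le_comap_smul_top I (LinearMap.mulLeft C a) hb

theorem mul_right_mem_smul_top {a : W} (ha : a ∈ I • (⊤ : Submodule C W)) (b : W) :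
    a * b ∈ I • (⊤ : Submodule C W) :=
  Submodule.smul_top_le_comap_smul_top I (LinearMap.mulRight C b) ha

theorem mul_mul_mem_pow_succ_smul_top {d : ℕ} {a b e : W}
    (hab : ∀ y, a * y * b ∈ I ^ d • (⊤ : Submodule C W)) (he : e ∈ I • (⊤ : Submodule C W)) :
    a * e * b ∈ I ^ (d + 1) • (⊤ : Submodule C W) := by
  rw [pow_succ', Submodule.mul_smul]
  induction he using Submodule.smul_induction_on' with
  | smul r hr y _ =>
    rw [mul_smul_comm, smul_mul_assoc]
    exact Submodule.smul_mem_smul hr (hab y)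
  | add x _ y _ hx hy =>
    rw [mul_add, add_mul]
    exact add_mem hx hy

variable (W I) in
/-- The central elements of the `C`-algebra `W` that lie in the ideal `I W`, for an ideal `I` of
`C`: the error terms that may be moved freely through a word. -/
def centralSMulTop : Submodule C W :=
  I • ⊤ ⊓ Subalgebra.toSubmodule (Subalgebra.center C W)

theorem mul_mul_mem_of_mem_centralSMulTop {d : ℕ} {z a b : W} (hz : z ∈ centralSMulTop W I)
    (hab : a * b ∈ I ^ d • (⊤ : Submodule C W)) :
    a * z * b ∈ I ^ (d + 1) • (⊤ : Submodule C W) := by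
  have hza : a * z = z * a := (Subalgebra.mem_center_iff (R := C)).mp hz.2 a
  rw [hza, mul_assoc, ← one_mul z]
  exact mul_mul_mem_pow_succ_smul_top (fun y => mul_left_mem_smul_top _ hab) hz.1

/-- A family in a `C`-algebra whose members anticommute and square to zero up to central elements
of `I W`: modulo these, it satisfies the relations of an exterior algebra. -/
structure AnticommutesModulo (I : Ideal C) (X : S → W) : Prop where
  mul_self_mem : ∀ s, X s * X s ∈ centralSMulTop W I
  mul_add_mul_mem : ∀ s t, X s * X t + X t * X s ∈ centralSMulTop W I

namespace AnticommutesModulo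

variable {X : S → W}

theorem prod_map_mem_of_repeated_letter (hX : AnticommutesModulo I X) {d n : ℕ}
    (hn : ∀ l : List S, l.length = n → (l.map X).prod ∈ I ^ d • (⊤ : Submodule C W)) (s : S)
    (u v t : List S) (hlen : u.length + v.length + t.length = n) :
    ((u ++ s :: (v ++ s :: t)).map X).prod ∈ I ^ (d + 1) • (⊤ : Submodule C W) := by
  induction v generalizing u with
  | nil =>
    have hshort := hn (u ++ t) (by simpa using hlen)
    rw [List.map_append, List.prod_append] at hshort
    simpa [mul_assoc] using mul_mul_mem_of_mem_centralSMulTop (hX.mul_self_mem s) hshort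
  | cons a v ih =>
    have hshort := hn (u ++ (v ++ s :: t)) (by
      simp only [List.length_append, List.length_cons] at hlen ⊢; omega)
    rw [List.map_append, List.prod_append] at hshort
    have herror := mul_mul_mem_of_mem_centralSMulTop (hX.mul_add_mul_mem s a) hshort
    have hswapped := ih (u ++ [a]) (by
      simp only [List.length_append, List.length_cons, List.length_nil] at hlen ⊢; omega)
    convert sub_mem herror hswapped using 1
    simp only [List.map_append, List.map_cons, List.map_nil, List.cons_append, List.prod_append,
      List.prod_cons, List.prod_nil]
    noncomm_ring

theorem prod_map_mem_pow_smul_top [Fintype S] (hX : AnticommutesModulo I X) (l : List S) :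
    (l.map X).prod ∈ I ^ ((l.length + 1 - Fintype.card S) / 2) • (⊤ : Submodule C W) := by
  induction hlen : l.length using Nat.strong_induction_on generalizing l with
  | _ n ih =>
  by_cases hl : l.Nodup
  · have hexp : (n + 1 - Fintype.card S) / 2 = 0 := by
      have := hl.length_le_card
      omega
    simp [hexp]
  · obtain ⟨s, u, v, t, rfl⟩ := exists_eq_append_of_not_nodup hl
    have hshort : u.length + v.length + t.length = n - 2 ∧ 2 ≤ n := by
      simp only [List.length_append, List.length_cons] at hlen
      omega
    have hexp : (n + 1 - Fintype.card S) / 2 ≤ (n - 2 + 1 - Fintype.card S) / 2 + 1 := by omega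
    exact Submodule.smul_mono_left (Ideal.pow_le_pow_right hexp)
      (hX.prod_map_mem_of_repeated_letter (fun l hl => ih (n - 2) (by omega) l hl) s u v t hshort.1)

-- `u` collects the letters that have already been moved to the left of all coefficients.
theorem prod_map_mul_matrix_apply_mem {ι : Type*} [Fintype ι] [DecidableEq ι] {X : Matrix ι ι W}
    (hX : AnticommutesModulo I fun s : ι × ι => X s.1 s.2)
    (hmove : ∀ (w : W) (p q : ι), ∃ w', w * X p q - X p q * w' ∈ I • (⊤ : Submodule C W))
    (l : List (Matrix ι ι W)) (u : List (ι × ι)) (M : Matrix ι ι W) (p q : ι) :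
    (u.map fun s => X s.1 s.2).prod * (M * (l.map (X * ·)).prod) p q ∈
      I ^ ((u.length + l.length + 1 - Fintype.card ι ^ 2) / 2) • (⊤ : Submodule C W) := by
  induction l generalizing u M p with
  | nil =>
    refine mul_right_mem_smul_top ?_ _
    simpa [sq] using hX.prod_map_mem_pow_smul_top u
  | cons B l ih =>
    set U := (u.map fun s => X s.1 s.2).prod
    set P := (l.map (X * ·)).prod
    have hexpand : (M * (X * (B * P))) p q = ∑ a, ∑ b, M p a * X a b * (B * P) b q := by
      rw [Matrix.mul_apply]
      simp only [Matrix.mul_apply (M := X), Finset.mul_sum, mul_assoc]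
    rw [List.map_cons, List.prod_cons, mul_assoc, hexpand, Finset.mul_sum, List.length_cons]
    refine sum_mem fun a _ => ?_
    rw [Finset.mul_sum]
    refine sum_mem fun b _ => ?_
    obtain ⟨w, hw⟩ := hmove (M p a) a b
    have hmain : U * (X a b * (w * (B * P) b q)) ∈
        I ^ ((u.length + (l.length + 1) + 1 - Fintype.card ι ^ 2) / 2) • (⊤ : Submodule C W) := by
      simpa [U, mul_assoc, add_assoc, add_comm 1] using ih (u ++ [(a, b)]) (w • B) b
    have herror : U * (M p a * X a b - X a b * w) * (B * P) b q ∈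
        I ^ ((u.length + (l.length + 1) + 1 - Fintype.card ι ^ 2) / 2) • (⊤ : Submodule C W) := by
      have hshort (y : W) := ih u (y • B) b
      simp only [Matrix.smul_mul, Matrix.smul_apply, smul_eq_mul, ← mul_assoc] at hshort
      exact Submodule.smul_mono_left (Ideal.pow_le_pow_right (by omega))
        (mul_mul_mem_pow_succ_smul_top hshort hw)
    convert add_mem hmain herror using 1
    rw [mul_sub, sub_mul]
    simp only [mul_assoc, add_sub_cancel]

end AnticommutesModulo

end Words

section ExteriorAlgebra

open ExteriorAlgebra

variable {R M : Type*} [CommRing R] [AddCommGroup M] [Module R M]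

theorem mul_ι_eq_ι_mul_involute (x : ExteriorAlgebra R M) (v : M) :
    x * ι R v = ι R v * CliffordAlgebra.involute x := by
  induction x using ExteriorAlgebra.induction with
  | algebraMap r => rw [AlgHom.commutes, Algebra.commutes]
  | ι u =>
    rw [ι, CliffordAlgebra.involute_ι, mul_neg]
    exact eq_neg_of_add_eq_zero_left (ι_add_mul_swap u v)
  | mul x y hx hy => rw [mul_assoc, hy, ← mul_assoc, hx, mul_assoc, map_mul]
  | add x y hx hy => rw [add_mul, hx, hy, map_add, mul_add]

theorem ι_mul_ι_mem_center (u v : M) :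
    ι R u * ι R v ∈ Subring.center (ExteriorAlgebra R M) := by
  refine Subring.mem_center_iff.mpr fun x => ?_
  rw [← mul_assoc, mul_ι_eq_ι_mul_involute x u, mul_assoc, mul_ι_eq_ι_mul_involute _ v,
    CliffordAlgebra.involute_involute, mul_assoc]

end ExteriorAlgebra

section GenericElement

open ExteriorAlgebra TensorProduct

variable {C E κ : Type*} [CommRing C] [Ring E] [Algebra C E]

theorem sum_mul_self_mem (Z : AddSubgroup E) (t : Finset κ) (y : κ → E)
    (hsq : ∀ i, y i * y i ∈ Z) (hanti : ∀ i j, y i * y j + y j * y i ∈ Z) :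
    (∑ i ∈ t, y i) * ∑ i ∈ t, y i ∈ Z := by
  classical
  induction t using Finset.induction_on with
  | empty => simp
  | insert a t ha ih =>
    have hcross : ∑ i ∈ t, (y a * y i + y i * y a) ∈ Z := sum_mem fun i _ => hanti a i
    rw [Finset.sum_add_distrib, ← Finset.mul_sum, ← Finset.sum_mul] at hcross
    convert add_mem (add_mem (hsq a) ih) hcross using 1
    rw [Finset.sum_insert ha]
    noncomm_ring

variable {I : Ideal C}

theorem tmul_mul_tmul_add_swap_mem {M : Type*} [AddCommGroup M] [Module C M]
    (hcomm : ∀ x y : E, ∃ z ∈ I, x * y - y * x = algebraMap C E z) (x y : E) (u v : M) :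
    (x ⊗ₜ ι C u) * (y ⊗ₜ ι C v) + (y ⊗ₜ ι C v) * (x ⊗ₜ ι C u) ∈
      centralSMulTop (E ⊗[C] ExteriorAlgebra C M) I := by
  obtain ⟨z, hz, hxy⟩ := hcomm x y
  have heq : (x ⊗ₜ ι C u) * (y ⊗ₜ ι C v) + (y ⊗ₜ ι C v) * (x ⊗ₜ ι C u) =
      z • (1 : E) ⊗ₜ[C] (ι C u * ι C v) := by
    rw [Algebra.TensorProduct.tmul_mul_tmul, Algebra.TensorProduct.tmul_mul_tmul,
      eq_neg_of_add_eq_zero_right (ι_add_mul_swap u v), tmul_neg, ← sub_eq_add_neg, ← sub_tmul,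
      hxy, Algebra.algebraMap_eq_smul_one, smul_tmul']
  rw [heq]
  refine ⟨Submodule.smul_mem_smul hz trivial, Submodule.smul_mem _ _ ?_⟩
  refine (Subalgebra.mem_center_iff (R := C)).mpr fun w => ?_
  induction w with
  | zero => simp
  | add x y hx hy => rw [add_mul, hx, hy, mul_add]
  | tmul b t => simp [Subring.mem_center_iff.mp (ι_mul_ι_mem_center u v) t]

variable [Fintype κ] [DecidableEq κ]

variable (C) in
/-- The element `∑ aᵢ θᵢ` of the algebra obtained from `E` by adjoining anticommuting variables
`θᵢ` that commute with `E`. -/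
noncomputable def genericElement (a : κ → E) : E ⊗[C] ExteriorAlgebra C (κ → C) :=
  ∑ i, a i ⊗ₜ ι C (Pi.single i 1)

theorem anticommutesModulo_genericElement {S : Type*}
    (hcomm : ∀ x y : E, ∃ z ∈ I, x * y - y * x = algebraMap C E z) (a : S → κ → E) :
    AnticommutesModulo I fun s => genericElement C (a s) where
  mul_self_mem s :=
    sum_mul_self_mem (centralSMulTop (E ⊗[C] ExteriorAlgebra C (κ → C)) I).toAddSubgroup
      Finset.univ (fun i => a s i ⊗ₜ[C] ι C (Pi.single i (1 : C)))
      (fun i => by simp) fun i j => tmul_mul_tmul_add_swap_mem hcomm _ _ _ _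
  mul_add_mul_mem s t := by
    let y (s : S) (i : κ) := a s i ⊗ₜ[C] ι C (Pi.single i 1 : κ → C)
    have hexpand : genericElement C (a s) * genericElement C (a t) +
        genericElement C (a t) * genericElement C (a s) =
          ∑ i, ∑ j, (y s i * y t j + y t j * y s i) := by
      simp only [Finset.sum_add_distrib, genericElement, Finset.sum_mul_sum]
      rw [Finset.sum_comm (f := fun i j => y t j * y s i)]
    rw [hexpand]
    exact sum_mem fun i _ => sum_mem fun j _ => tmul_mul_tmul_add_swap_mem hcomm _ _ _ _

theorem exists_mul_genericElement_sub_mem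
    (hcomm : ∀ x y : E, ∃ z ∈ I, x * y - y * x = algebraMap C E z) (a : κ → E)
    (w : E ⊗[C] ExteriorAlgebra C (κ → C)) :
    ∃ w', w * genericElement C a - genericElement C a * w' ∈
      I • (⊤ : Submodule C (E ⊗[C] ExteriorAlgebra C (κ → C))) := by
  induction w with
  | zero => exact ⟨0, by simp⟩
  | add x y hx hy =>
    obtain ⟨x', hx'⟩ := hx
    obtain ⟨y', hy'⟩ := hy
    refine ⟨x' + y', ?_⟩
    convert add_mem hx' hy' using 1
    noncomm_ring
  | tmul b t =>
    refine ⟨b ⊗ₜ CliffordAlgebra.involute t, ?_⟩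
    rw [genericElement, Finset.mul_sum, Finset.sum_mul, ← Finset.sum_sub_distrib]
    refine sum_mem fun i _ => ?_
    obtain ⟨z, hz, hbz⟩ := hcomm b (a i)
    rw [Algebra.TensorProduct.tmul_mul_tmul, Algebra.TensorProduct.tmul_mul_tmul,
      mul_ι_eq_ι_mul_involute, ← sub_tmul, hbz, Algebra.algebraMap_eq_smul_one, ← smul_tmul']
    exact Submodule.smul_mem_smul hz trivial

end GenericElement

section CapelliSum

open ExteriorAlgebra TensorProduct

/-- The value `∑ sign(π) B₀ A_{π(1)} B₁ ⋯ A_{π(k)} B_k` of the Capelli polynomial of `x`-degree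
`k`. -/
def capelliSum {T : Type*} [Ring T] {k : ℕ} (A : Fin k → T) (B : Fin (k + 1) → T) : T :=
  ∑ π : Equiv.Perm (Fin k),
    (Equiv.Perm.sign π : ℤ) • (B 0 * (List.ofFn fun i : Fin k => A (π i) * B i.succ).prod)

variable {C E : Type*} [CommRing C] [Ring E] [Algebra C E]

theorem prod_ofFn_tmul {F : Type*} [Ring F] [Algebra C F] {k : ℕ} (a : Fin k → E)
    (t : Fin k → F) :
    (List.ofFn fun i => a i ⊗ₜ[C] t i).prod = (List.ofFn a).prod ⊗ₜ (List.ofFn t).prod := by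
  induction k with
  | zero => simp [Algebra.TensorProduct.one_def]
  | succ k ih =>
    simp only [List.ofFn_succ, List.prod_cons, ih, Algebra.TensorProduct.tmul_mul_tmul]

theorem sum_tmul_ιMulti {N : Type*} [AddCommGroup N] [Module C N] {k : ℕ}
    (f : (Fin k → Fin k) → E) (v : Fin k → N) :
    ∑ φ, f φ ⊗ₜ[C] ιMulti C k (v ∘ φ) =
      (∑ π : Equiv.Perm (Fin k), (Equiv.Perm.sign π : ℤ) • f π) ⊗ₜ ιMulti C k v := by
  have hzero (φ : Fin k → Fin k) (hφ : φ ∉ Set.range ((⇑) : Equiv.Perm (Fin k) → _)) :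
      f φ ⊗ₜ[C] ιMulti C k (v ∘ φ) = 0 := by
    rw [ιMulti_eq_zero_of_not_inj, tmul_zero]
    exact fun hinj => hφ ⟨Equiv.ofBijective φ (Finite.injective_iff_bijective.mp
      hinj.of_comp), rfl⟩
  rw [sum_tmul]
  refine (Fintype.sum_of_injective _ DFunLike.coe_injective _ _ hzero fun π => ?_).symm
  rw [← smul_tmul', ← tmul_smul, ← Units.smul_def]
  exact congrArg _ ((ιMulti C k).map_perm v π).symm

theorem mul_prod_genericElement_mul {k : ℕ} (A : Fin k → E) (B : Fin (k + 1) → E) :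
    (B 0 ⊗ₜ 1) * (List.ofFn fun i => genericElement C A * (B i.succ ⊗ₜ 1)).prod =
      capelliSum A B ⊗ₜ ιMulti C k fun i => Pi.single i 1 := by
  let y (i j : Fin k) := (A j * B i.succ) ⊗ₜ[C] ι C (Pi.single j 1 : Fin k → C)
  have hfactor (i : Fin k) : genericElement C A * (B i.succ ⊗ₜ 1) = ∑ j, y i j := by
    simp only [y, genericElement, Finset.sum_mul, Algebra.TensorProduct.tmul_mul_tmul, mul_one]
  have hexpand : (List.ofFn fun i => ∑ j, y i j).prod =
      ∑ φ : Fin k → Fin k, (List.ofFn fun i => y i (φ i)).prod :=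
    (MultilinearMap.mkPiAlgebraFin C k _).map_sum y
  rw [capelliSum, ← sum_tmul_ιMulti fun φ => B 0 * (List.ofFn fun i => A (φ i) * B i.succ).prod]
  simp only [hfactor, hexpand, Finset.mul_sum]
  refine Finset.sum_congr rfl fun φ _ => ?_
  rw [prod_ofFn_tmul, Algebra.TensorProduct.tmul_mul_tmul, one_mul, ιMulti_apply]
  rfl

theorem mem_smul_top_of_tmul_ιMulti_single_mem {J : Ideal C} {k : ℕ} {x : E}
    (hx : x ⊗ₜ ιMulti C k (fun i => Pi.single i (1 : C)) ∈
      J • (⊤ : Submodule C (E ⊗[C] ExteriorAlgebra C (Fin k → C)))) :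
    x ∈ J • (⊤ : Submodule C E) := by
  let coeff : ExteriorAlgebra C (Fin k → C) →ₗ[C] C :=
    liftAlternating (Pi.single k (Pi.basisFun C (Fin k)).det)
  have hcoeff : coeff (ιMulti C k fun i => Pi.single i 1) = 1 := by
    have hbasis : (fun i => Pi.single i 1) = Pi.basisFun C (Fin k) :=
      funext fun i => (Pi.basisFun_apply C (Fin k) i).symm
    rw [liftAlternating_apply_ιMulti, Pi.single_eq_same, hbasis, Module.Basis.det_self]
  simpa [hcoeff] using Submodule.smul_top_le_comap_smul_top J
    ((TensorProduct.rid C E).toLinearMap ∘ₗ coeff.lTensor E) hx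

variable {n F : Type*} [Fintype n] [DecidableEq n] [Ring F] [Algebra C F]

variable (C E n F) in
/-- The entrywise map `Mₙ(E) ⊗ F → Mₙ(E ⊗ F)`. -/
noncomputable def matrixTensorHom : Matrix n n E ⊗[C] F →ₐ[C] Matrix n n (E ⊗[C] F) :=
  Algebra.TensorProduct.lift Algebra.TensorProduct.includeLeft.mapMatrix
    ((Matrix.scalarAlgHom n C).comp Algebra.TensorProduct.includeRight) fun M t => by
      refine (commute_iff_eq _ _).mpr ?_
      ext i j
      simp [Matrix.mul_apply, Matrix.diagonal_apply]

theorem matrixTensorHom_tmul_apply (M : Matrix n n E) (t : F) (i j : n) :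
    matrixTensorHom C E n F (M ⊗ₜ t) i j = M i j ⊗ₜ t := by
  simp [matrixTensorHom]

theorem matrixTensorHom_genericElement_apply {κ : Type*} [Fintype κ] [DecidableEq κ]
    (A : κ → Matrix n n E) (i j : n) :
    matrixTensorHom C E n _ (genericElement C A) i j = genericElement C fun s => A s i j := by
  simp only [genericElement, map_sum, Matrix.sum_apply, matrixTensorHom_tmul_apply]

theorem capelliSum_matrix_apply_mem {I : Ideal C} {k : ℕ}
    (hcomm : ∀ x y : E, ∃ z ∈ I, x * y - y * x = algebraMap C E z) (A : Fin k → Matrix n n E)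
    (B : Fin (k + 1) → Matrix n n E) (p q : n) :
    capelliSum A B p q ∈ I ^ ((k + 1 - Fintype.card n ^ 2) / 2) • (⊤ : Submodule C E) := by
  let Φ := matrixTensorHom C E n (ExteriorAlgebra C (Fin k → C))
  let X := Φ (genericElement C A)
  have hX (s t : n) : X s t = genericElement C fun i => A i s t :=
    matrixTensorHom_genericElement_apply A s t
  have hprod : Φ (B 0 ⊗ₜ 1) * (List.ofFn fun i => X * Φ (B i.succ ⊗ₜ 1)).prod =
      Φ (capelliSum A B ⊗ₜ ιMulti C k fun i => Pi.single i 1) := by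
    rw [← mul_prod_genericElement_mul, map_mul, map_list_prod, List.map_ofFn]
    simp [X, Function.comp_def]
  have hmem := AnticommutesModulo.prod_map_mul_matrix_apply_mem (I := I) (X := X)
    (by simpa only [hX] using
      anticommutesModulo_genericElement hcomm fun (s : n × n) i => A i s.1 s.2)
    (fun w s t => hX s t ▸ exists_mul_genericElement_sub_mem hcomm _ w)
    (List.ofFn fun i => Φ (B i.succ ⊗ₜ 1)) [] (Φ (B 0 ⊗ₜ 1)) p q
  simp only [List.map_nil, List.prod_nil, one_mul, List.length_nil, zero_add, List.length_ofFn,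
    List.map_ofFn, Function.comp_def, hprod, Φ, matrixTensorHom_tmul_apply] at hmem
  exact mem_smul_top_of_tmul_ιMulti_single_mem hmem

end CapelliSum

section GrassmannAlgebra

open scoped Pointwise
open ExteriorAlgebra

variable (R M : Type*) [CommRing R] [AddCommGroup M] [Module R M]

/-- The ideal generated by the products `ι u * ι v` in the center of the exterior algebra; every
commutator of the exterior algebra lies in it. -/
def centralProductIdeal : Ideal (Subring.center (ExteriorAlgebra R M)) :=
  Ideal.span {z | ∃ u v : M, (z : ExteriorAlgebra R M) = ι R u * ι R v}

theorem span_center_insert_one_range_ι :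
    Submodule.span (Subring.center (ExteriorAlgebra R M))
      (insert 1 (Set.range (ι R : M → ExteriorAlgebra R M))) = ⊤ := by
  set N := Submodule.span (Subring.center (ExteriorAlgebra R M))
    (insert 1 (Set.range (ι R : M → ExteriorAlgebra R M)))
  have hcenter {z : ExteriorAlgebra R M} (hz : z ∈ Subring.center _) : z ∈ N := by
    simpa [Subring.smul_def] using
      N.smul_mem ⟨z, hz⟩ (Submodule.subset_span (Set.mem_insert 1 _))
  have hι_mul (u : M) {x : ExteriorAlgebra R M} (hx : x ∈ N) : ι R u * x ∈ N := by
    induction hx using Submodule.span_induction with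
    | mem x hx =>
      obtain rfl | ⟨v, rfl⟩ := hx
      · rw [mul_one]
        exact Submodule.subset_span (Set.mem_insert_of_mem 1 ⟨u, rfl⟩)
      · exact hcenter (ι_mul_ι_mem_center u v)
    | zero => simp
    | add x y _ _ hx hy => simpa only [mul_add] using add_mem hx hy
    | smul c x _ hx => simpa only [mul_smul_comm] using N.smul_mem c hx
  refine Submodule.eq_top_iff'.mpr fun x => ?_
  induction x using CliffordAlgebra.left_induction with
  | algebraMap r =>
    exact hcenter (Subring.mem_center_iff.mpr fun x => (Algebra.commutes r x).symm)
  | add x y hx hy => exact add_mem hx hy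
  | ι_mul x u hx => exact hι_mul u hx

variable {R M}

theorem exists_commutator_eq_algebraMap (x y : ExteriorAlgebra R M) :
    ∃ z ∈ centralProductIdeal R M, x * y - y * x = algebraMap _ (ExteriorAlgebra R M) z := by
  let mul := LinearMap.mul (Subring.center (ExteriorAlgebra R M)) (ExteriorAlgebra R M)
  let N := Submodule.map (Algebra.linearMap _ (ExteriorAlgebra R M)) (centralProductIdeal R M)
  suffices h : (mul - mul.flip) x y ∈ N by
    obtain ⟨z, hz, hxy⟩ := h
    exact ⟨z, hz, hxy.symm⟩
  have htop := span_center_insert_one_range_ι R M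
  refine LinearMap.BilinMap.apply_apply_mem_of_mem_span N _ _ _ ?_ x y
    (htop ▸ Submodule.mem_top) (htop ▸ Submodule.mem_top)
  rintro _ (rfl | ⟨u, rfl⟩) _ (rfl | ⟨v, rfl⟩)
  iterate 3 simp [mul]
  refine ⟨⟨_, ι_mul_ι_mem_center u v⟩ + ⟨_, ι_mul_ι_mem_center u v⟩,
    add_mem (Ideal.subset_span ⟨u, v, rfl⟩) (Ideal.subset_span ⟨u, v, rfl⟩), ?_⟩
  change ι R u * ι R v + ι R u * ι R v = ι R u * ι R v - ι R v * ι R u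
  rw [sub_eq_add_neg, ← eq_neg_of_add_eq_zero_left (ι_add_mul_swap u v)]

theorem centralProductIdeal_pow_eq_bot {r : ℕ} (hM : ⋀[R]^(2 * r) M = ⊥) :
    centralProductIdeal R M ^ r = ⊥ := by
  set S := {z : Subring.center (ExteriorAlgebra R M) | ∃ u v : M, z = ι R u * ι R v}
  have hgraded (d : ℕ) : ∀ z ∈ S ^ d, (z : ExteriorAlgebra R M) ∈ ⋀[R]^(2 * d) M := by
    induction d with
    | zero => rintro _ rfl; exact Submodule.one_le.mp (by simp)
    | succ d ih =>
      rw [pow_succ]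
      rintro _ ⟨z, hz, w, ⟨u, v, hw⟩, rfl⟩
      change (z : ExteriorAlgebra R M) * w ∈ LinearMap.range (ι R) ^ (2 * d + 2)
      rw [pow_add, sq, hw]
      exact Submodule.mul_mem_mul (ih z hz) (Submodule.mul_mem_mul ⟨u, rfl⟩ ⟨v, rfl⟩)
  rw [centralProductIdeal, Ideal.span, Submodule.span_pow, Submodule.span_eq_bot]
  intro z hz
  exact Subtype.ext ((Submodule.mem_bot R).mp (hM ▸ hgraded r z hz))

theorem exteriorPower_eq_bot_of_card_lt_s8 {κ : Type*} [Fintype κ] {v : κ → M}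
    (hv : Submodule.span R (Set.range v) = ⊤) {d : ℕ} (hd : Fintype.card κ < d) :
    ⋀[R]^d M = ⊥ := by
  rw [← exteriorPower.ιMulti_span_fixedDegree_of_span_eq_top R d M hv, Submodule.span_eq_bot]
  rintro _ ⟨a, ha, rfl⟩
  obtain ⟨f, rfl⟩ := Set.range_subset_range_iff_exists_comp.mp ha
  refine ιMulti_eq_zero_of_not_inj fun hinj => ?_
  simpa [hd.not_ge] using Fintype.card_le_of_injective f hinj.of_comp

end GrassmannAlgebra

theorem grassmann_matrix_capelli_identity_general {R M n : Type*} [CommRing R] [AddCommGroup M]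
    [Module R M] [Fintype n] [DecidableEq n] {r k : ℕ} (hM : ⋀[R]^(2 * r) M = ⊥)
    (hk : Fintype.card n ^ 2 + 2 * r ≤ k + 1)
    (A : Fin k → Matrix n n (ExteriorAlgebra R M))
    (B : Fin (k + 1) → Matrix n n (ExteriorAlgebra R M)) :
    ∑ π : Equiv.Perm (Fin k),
      (Equiv.Perm.sign π : ℤ) •
        (B 0 * (List.ofFn fun i : Fin k => A (π i) * B i.succ).prod) = 0 := by
  have hpow : centralProductIdeal R M ^ ((k + 1 - Fintype.card n ^ 2) / 2) = ⊥ :=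
    le_bot_iff.mp <|
      (Ideal.pow_le_pow_right (by omega)).trans (centralProductIdeal_pow_eq_bot hM).le
  ext p q
  have hmem := capelliSum_matrix_apply_mem exists_commutator_eq_algebraMap A B p q
  rw [hpow, Submodule.bot_smul] at hmem
  exact hmem

/-- The ring of `n × n` matrices over the Grassmann algebra of rank `m` satisfies the
Capelli identity of `x`-degree `k = n² + 2⌊m/2⌋ + 1`. -/
theorem grassmann_matrix_capelli_identity
    (R : Type*) [CommRing R] (m n : ℕ) (hn : 1 ≤ n)
    (k : ℕ) (hk : k = n ^ 2 + 2 * (m / 2) + 1)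
    (A : Fin k → Matrix (Fin n) (Fin n) (ExteriorAlgebra R (Fin m → R)))
    (B : Fin (k + 1) → Matrix (Fin n) (Fin n) (ExteriorAlgebra R (Fin m → R))) :
    ∑ π : Equiv.Perm (Fin k),
      (Equiv.Perm.sign π : ℤ) •
        (B 0 * (List.ofFn fun i : Fin k => A (π i) * B i.succ).prod) = 0 :=
  grassmann_matrix_capelli_identity_general (r := m / 2 + 1)
    (exteriorPower_eq_bot_of_card_lt_s8 (Pi.basisFun R (Fin m)).span_eq (by simp; omega))
    (by simp [hk]; omega) A B
end

section
/- Let R be a commutative ring, m ≥ 0 and n ≥ 1. Then the ring M_n E^m satisfies the standard identity of degree k = 2n(⌊m/2⌋+1); that is, for all A₁,…,A_k ∈ M_n E^m, Σ_{π ∈ 𝔖_k} sign(π) A_{π(1)} ⋯ A_{π(k)} = 0. -/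
/-!
Let `E` be an exterior algebra and `I` its ideal of elements without terms of degree less than two.
Then `E / I` is a square-zero extension of the base ring, hence commutative, so by the
Amitsur–Levitzki theorem `s_{2n}` takes its values in the matrices with entries in `I`. As
`s_{2nq}` is a signed sum of products of `q` values of `s_{2n}`, its values have entries in `I ^ q`,
which has only terms of degree at least `2q` and is zero once `2q` exceeds the rank.

For the Amitsur–Levitzki theorem we follow Rosset: by multilinearity the base ring may be taken to
be `ℤ`. If `e_1, …, e_{2n}` are generators of an exterior algebra, the entries of
`X = ∑ i, e_i A_i` anticommute. Hence the entries of `X ^ 2` commute and the traces of its powers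
vanish, whence `X ^ (2n) = 0`; but `X ^ (2n) = s_{2n}(A) e_1 ∧ ⋯ ∧ e_{2n}`.
-/

section TraceNilpotency

open Polynomial
open scoped IsMulCommutative

variable {n S : Type*} [Fintype n] [DecidableEq n]

theorem derivative_det_eq_trace_adjugate_mul [CommRing S] (M : Matrix n n S[X]) :
    derivative M.det = (M.adjugate * M.map derivative).trace := by
  calc derivative M.det = ∑ i, (M.updateCol i fun j => derivative (M j i)).det := by
        simp only [Matrix.det_apply, map_sum, Units.smul_def, map_zsmul, derivative_prod_finset]
        rw [Finset.sum_comm]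
        refine Finset.sum_congr rfl fun σ _ => ?_
        rw [← Finset.smul_sum]
        congr 1
        refine Finset.sum_congr rfl fun i _ => ?_
        rw [← Finset.prod_erase_mul _ _ (Finset.mem_univ i), Matrix.updateCol_self]
        congr 1
        refine Finset.prod_congr rfl fun j hj => ?_
        rw [Matrix.updateCol_ne (Finset.ne_of_mem_erase hj)]
    _ = (M.adjugate * M.map derivative).trace := by
        refine Finset.sum_congr rfl fun i _ => ?_
        rw [← Matrix.cramer_apply, Matrix.cramer_eq_adjugate_mulVec]
        rfl

theorem eq_zero_of_forall_eq_X_mul_succ [Semiring S] {q : ℕ → S[X]}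
    (h : ∀ j, q j = X * q (j + 1)) (j : ℕ) : q j = 0 := by
  ext i
  induction i generalizing j with
  | zero => rw [h, coeff_X_mul_zero, coeff_zero]
  | succ i ih => rw [h, coeff_X_mul, ih, coeff_zero, coeff_zero]

theorem derivative_charpolyRev_eq_zero_of_trace_pow_eq_zero [CommRing S] {N : Matrix n n S}
    (h : ∀ j : ℕ, (N ^ (j + 1)).trace = 0) : derivative N.charpolyRev = 0 := by
  -- By Jacobi's formula the derivative is `-q 0`, where `q j = tr (adj (1 - X T) * T ^ (j + 1))`
  -- satisfies `q j = X * q (j + 1)`, so that `q 0` is divisible by every power of `X`.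
  set T := N.map C with hT
  set P := 1 - (X : S[X]) • T with hP
  have trace_T_pow (j : ℕ) : (T ^ (j + 1)).trace = 0 := by
    rw [hT, ← RingHom.mapMatrix_apply, ← map_pow, RingHom.mapMatrix_apply,
      ← AddMonoidHom.map_trace, h, map_zero]
  have trace_step (j : ℕ) : (P.adjugate * T ^ (j + 1)).trace =
      X * (P.adjugate * T ^ (j + 1 + 1)).trace := by
    calc (P.adjugate * T ^ (j + 1)).trace
        = (P.adjugate * (P * T ^ (j + 1) + X • T ^ (j + 1 + 1))).trace := by
          rw [hP, sub_mul, one_mul, smul_mul_assoc, ← pow_succ', sub_add_cancel]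
      _ = P.det * (T ^ (j + 1)).trace + X * (P.adjugate * T ^ (j + 1 + 1)).trace := by
          rw [mul_add, ← mul_assoc, Matrix.adjugate_mul, smul_mul_assoc, one_mul, mul_smul_comm,
            Matrix.trace_add, Matrix.trace_smul, Matrix.trace_smul, smul_eq_mul, smul_eq_mul]
      _ = X * (P.adjugate * T ^ (j + 1 + 1)).trace := by rw [trace_T_pow, mul_zero, zero_add]
  have derivative_P : P.map derivative = -T := by
    ext1 a b
    simp [hP, hT, Matrix.one_apply, apply_ite]
  rw [Matrix.charpolyRev, derivative_det_eq_trace_adjugate_mul, derivative_P, mul_neg,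
    Matrix.trace_neg, neg_eq_zero]
  simpa only [zero_add, pow_one] using eq_zero_of_forall_eq_X_mul_succ trace_step 0

theorem pow_card_eq_zero_of_charpolyRev_eq_one [CommRing S] {N : Matrix n n S}
    (h : N.charpolyRev = 1) : N ^ Fintype.card n = 0 := by
  nontriviality S
  have charpoly_eq : N.charpoly = X ^ Fintype.card n := by
    rw [← reflect_one, ← h, ← Matrix.reverse_charpoly, reverse, Matrix.charpoly_natDegree_eq_dim,
      reflect_reflect]
  simpa [charpoly_eq] using N.aeval_self_charpoly

theorem pow_card_eq_zero_of_trace_pow_eq_zero [CommRing S] [IsAddTorsionFree S]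
    {N : Matrix n n S} (h : ∀ j : ℕ, (N ^ (j + 1)).trace = 0) : N ^ Fintype.card n = 0 := by
  apply pow_card_eq_zero_of_charpolyRev_eq_one
  rw [eq_C_of_derivative_eq_zero (derivative_charpolyRev_eq_zero_of_trace_pow_eq_zero h),
    coeff_zero_eq_eval_zero, Matrix.eval_charpolyRev, C_1]

theorem pow_card_eq_zero_of_commute_of_trace_pow_eq_zero [Ring S] [IsAddTorsionFree S]
    {Y : Matrix n n S} (hY : ∀ a b c d, Commute (Y a b) (Y c d))
    (h : ∀ j : ℕ, (Y ^ (j + 1)).trace = 0) : Y ^ Fintype.card n = 0 := by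
  let entries := Set.range fun p : n × n => Y p.1 p.2
  have : IsMulCommutative (Subring.closure entries) := Subring.isMulCommutative_closure <| by
    rintro _ ⟨p, rfl⟩ _ ⟨q, rfl⟩
    exact hY ..
  let f := (Subring.closure entries).subtype
  have f_injective : Function.Injective f := Subtype.val_injective
  have : IsAddTorsionFree (Subring.closure entries) :=
    f_injective.isAddTorsionFree f.toAddMonoidHom
  let N : Matrix n n (Subring.closure entries) :=
    .of fun a b => ⟨Y a b, Subring.subset_closure ⟨(a, b), rfl⟩⟩
  have map_N : f.mapMatrix N = Y := rfl
  have trace_N_pow (j : ℕ) : (N ^ (j + 1)).trace = 0 := by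
    apply f_injective
    rw [AddMonoidHom.map_trace, ← RingHom.mapMatrix_apply, map_pow f.mapMatrix, map_N, h, map_zero]
  rw [← map_N, ← map_pow f.mapMatrix, pow_card_eq_zero_of_trace_pow_eq_zero trace_N_pow, map_zero]

end TraceNilpotency

section Anticommuting

variable {n S : Type*} [Fintype n] [DecidableEq n] [Ring S] {X : Matrix n n S}

theorem mul_matrix_pow_apply_of_anticommute {x : S} (hx : ∀ a b, x * X a b = -(X a b * x))
    (j : ℕ) (a b : n) : x * (X ^ j) a b = (-1) ^ j * ((X ^ j) a b * x) := by
  induction j generalizing a b with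
  | zero => by_cases hab : a = b <;> simp [hab]
  | succ j ih =>
    simp only [pow_succ _ j, Matrix.mul_apply, Finset.mul_sum, Finset.sum_mul]
    refine Finset.sum_congr rfl fun c _ => ?_
    rw [← mul_assoc x, ih, mul_neg_one, neg_mul, mul_assoc, mul_assoc, hx, mul_neg, mul_neg,
      mul_assoc]

theorem matrix_pow_two_mul_card_eq_zero_of_anticommute [IsAddTorsionFree S]
    (hX : ∀ a b c d, X a b * X c d = -(X c d * X a b)) : X ^ (2 * Fintype.card n) = 0 := by
  have commute_sq (a b c d : n) : Commute (X a b) ((X ^ 2) c d) := by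
    rw [commute_iff_eq]
    simpa only [even_two.neg_one_pow, one_mul] using
      mul_matrix_pow_apply_of_anticommute (hX a b) 2 c d
  have trace_even (j : ℕ) : ((X ^ 2) ^ (j + 1)).trace = 0 := by
    rw [← self_eq_neg, ← pow_mul]
    calc (X ^ (2 * j + 2)).trace = ∑ a, ∑ b, X a b * (X ^ (2 * j + 1)) b a := by
          rw [pow_succ']; rfl
      _ = -∑ a, ∑ b, (X ^ (2 * j + 1)) b a * X a b := by
          simp only [mul_matrix_pow_apply_of_anticommute (hX _ _),
            (odd_two_mul_add_one j).neg_one_pow, neg_one_mul, Finset.sum_neg_distrib]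
      _ = -(X ^ (2 * j + 2)).trace := by rw [Finset.sum_comm, pow_succ]; rfl
  rw [pow_mul]
  refine pow_card_eq_zero_of_commute_of_trace_pow_eq_zero (fun a b c d => ?_) trace_even
  rw [sq, Matrix.mul_apply, ← sq]
  exact Commute.sum_left _ _ _ fun e _ => (commute_sq a e c d).mul_left (commute_sq e b c d)

end Anticommuting

section StandardPolynomial

/-- The standard polynomial `s_k`. Over an arbitrary base ring `R` it is an `R`-multilinear
alternating map, obtained by antisymmetrizing the `k`-fold product. -/
def standardPolynomial (R S : Type*) [CommRing R] [Ring S] [Algebra R S] (k : ℕ) :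
    S [⋀^Fin k]→ₗ[R] S :=
  MultilinearMap.alternatization (MultilinearMap.mkPiAlgebraFin R k S)

variable {R S : Type*} [CommRing R] [Ring S] [Algebra R S]

variable (R) in
theorem standardPolynomial_apply {k : ℕ} (a : Fin k → S) :
    standardPolynomial R S k a =
      ∑ σ : Equiv.Perm (Fin k), (Equiv.Perm.sign σ : ℤ) • (List.ofFn fun i => a (σ i)).prod := by
  rw [standardPolynomial, MultilinearMap.alternatization_apply]
  rfl

theorem map_standardPolynomial (R R' : Type*) {S S' : Type*} [CommRing R] [Ring S] [Algebra R S]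
    [CommRing R'] [Ring S'] [Algebra R' S'] {k : ℕ} (f : S →+* S') (a : Fin k → S) :
    f (standardPolynomial R S k a) = standardPolynomial R' S' k fun i => f (a i) := by
  simp only [standardPolynomial_apply, map_sum, map_zsmul, map_list_prod, List.map_ofFn]
  rfl

theorem standardPolynomial_add_apply {k l : ℕ} (a : Fin (k + l) → S) :
    standardPolynomial R S (k + l) a = LinearMap.mul' R S
      ((standardPolynomial R S k).domCoprod (standardPolynomial R S l) (a ∘ finSumFinEquiv)) := by
  have mul_comp_domCoprod :
      (LinearMap.mul' R S).compMultilinearMap (MultilinearMap.domCoprod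
        (MultilinearMap.mkPiAlgebraFin R k S) (MultilinearMap.mkPiAlgebraFin R l S)) =
      (MultilinearMap.mkPiAlgebraFin R (k + l) S).domDomCongr finSumFinEquiv.symm := by
    ext v
    simp only [LinearMap.compMultilinearMap_apply, MultilinearMap.domCoprod_apply,
      MultilinearMap.domDomCongr_apply, MultilinearMap.mkPiAlgebraFin_apply,
      LinearMap.mul'_apply, List.ofFn_add, List.prod_append]
    congr 3 with i
    · exact congrArg v (finSumFinEquiv_symm_apply_castAdd i).symm
    · exact congrArg v (finSumFinEquiv_symm_apply_natAdd i).symm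
  simp only [standardPolynomial]
  rw [← MultilinearMap.domCoprod_alternization, ← LinearMap.compAlternatingMap_apply,
    ← LinearMap.compMultilinearMap_alternatization, mul_comp_domCoprod,
    MultilinearMap.alternatization_apply, MultilinearMap.alternatization_apply]
  refine Fintype.sum_equiv finSumFinEquiv.symm.permCongr _ _ fun σ => ?_
  rw [Equiv.Perm.sign_permCongr]
  congr 1
  simp [MultilinearMap.domDomCongr_apply, Function.comp_def]

theorem standardPolynomial_add_mem_mul {k l : ℕ} {P Q : Submodule R S}
    (hP : ∀ a, standardPolynomial R S k a ∈ P) (hQ : ∀ b, standardPolynomial R S l b ∈ Q)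
    (a : Fin (k + l) → S) : standardPolynomial R S (k + l) a ∈ P * Q := by
  rw [standardPolynomial_add_apply, AlternatingMap.domCoprod_apply, sum_apply, map_sum]
  refine Submodule.sum_mem _ fun σ _ => ?_
  induction σ using Quotient.inductionOn' with | _ σ
  rw [AlternatingMap.domCoprod.summand_mk'', smul_apply, Units.smul_def, map_zsmul]
  exact zsmul_mem (Submodule.mul_mem_mul (hP _) (hQ _)) _

theorem standardPolynomial_mul_mem_pow {k : ℕ} {P : Submodule R S}
    (hP : ∀ a, standardPolynomial R S k a ∈ P) (q : ℕ) (a : Fin (k * q) → S) :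
    standardPolynomial R S (k * q) a ∈ P ^ q := by
  induction q with
  | zero => simpa [standardPolynomial_apply] using ⟨1, map_one (algebraMap R S)⟩
  | succ q ih => exact pow_succ P q ▸ standardPolynomial_add_mem_mul ih hP a

end StandardPolynomial

section AmitsurLevitzki

variable {R n : Type*} [CommRing R] [Fintype n] [DecidableEq n]

theorem list_ofFn_map_smul_prod {S : Type*} [Semiring S] [Algebra R S] {l : ℕ}
    (A : Fin l → Matrix n n R) (x : Fin l → S) :
    (List.ofFn fun i => (A i).map (· • x i)).prod =
      (List.ofFn A).prod.map (· • (List.ofFn x).prod) := by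
  induction l with
  | zero =>
    ext a b
    by_cases hab : a = b <;> simp [hab]
  | succ l ih =>
    simp only [List.ofFn_succ, List.prod_cons, ih]
    ext a b
    simp only [Matrix.mul_apply, Matrix.map_apply, Finset.sum_smul, smul_mul_smul_comm]

open ExteriorAlgebra

theorem sum_map_smul_ι_pow {M : Type*} [AddCommGroup M] [Module R M] {k : ℕ}
    (A : Fin k → Matrix n n R) (v : Fin k → M) :
    (∑ i, (A i).map (· • ι R (v i))) ^ k =
      (standardPolynomial R _ k A).map (· • ιMulti R k v) := by
  let summand (f : Fin k → Fin k) : Matrix n n (ExteriorAlgebra R M) :=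
    (List.ofFn (A ∘ f)).prod.map (· • ιMulti R k (v ∘ f))
  have expand : (∑ i, (A i).map (· • ι R (v i))) ^ k = ∑ f, summand f := by
    rw [← MultilinearMap.mkPiAlgebraFin_apply_const (R := R), MultilinearMap.map_sum]
    refine Finset.sum_congr rfl fun f _ => ?_
    simp only [summand, ιMulti_apply, MultilinearMap.mkPiAlgebraFin_apply]
    exact list_ofFn_map_smul_prod (A ∘ f) _
  have summand_of_not_injective (f : Fin k → Fin k)
      (hf : f ∉ Set.range ((⇑) : Equiv.Perm (Fin k) → Fin k → Fin k)) : summand f = 0 := by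
    have hvf : ¬Function.Injective (v ∘ f) := fun hvf =>
      hf ⟨.ofBijective f (Finite.injective_iff_bijective.mp hvf.of_comp), rfl⟩
    ext a b
    simp [summand, ιMulti_eq_zero_of_not_inj hvf]
  have summand_perm (σ : Equiv.Perm (Fin k)) :
      ((Equiv.Perm.sign σ : ℤ) • (List.ofFn fun i => A (σ i)).prod).map
        (· • ιMulti R k v) = summand σ := by
    have ιMulti_comp : ιMulti R k (v ∘ σ) = Equiv.Perm.sign σ • ιMulti R k v :=
      AlternatingMap.map_perm ..
    ext a b
    simp only [summand, ιMulti_comp, Matrix.map_apply]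
    rw [Units.smul_def, Matrix.smul_apply, smul_assoc, smul_comm]
    rfl
  rw [expand, ← Fintype.sum_of_injective _ DFunLike.coe_injective _ summand
    summand_of_not_injective summand_perm, standardPolynomial_apply]
  ext a b
  simp [Matrix.sum_apply, Finset.sum_smul]

theorem eq_zero_of_smul_ιMulti_basisFun_eq_zero {k : ℕ} {c : R}
    (h : c • ιMulti R k (Pi.basisFun R (Fin k)) = 0) : c = 0 := by
  let φ := liftAlternating (R := R) (Pi.single k (Matrix.detRowAlternating (n := Fin k)))
  have hφ : φ (ιMulti R k (Pi.basisFun R (Fin k))) = 1 := by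
    rw [liftAlternating_apply_ιMulti, Pi.single_eq_same]
    rw [← Pi.basisFun_det, Module.Basis.det_self]
  simpa [hφ] using congrArg φ h

theorem standardPolynomial_matrix_eq_zero_of_isAddTorsionFree [IsAddTorsionFree R]
    (A : Fin (2 * Fintype.card n) → Matrix n n R) : standardPolynomial R _ _ A = 0 := by
  let e := Pi.basisFun R (Fin (2 * Fintype.card n))
  have : IsAddTorsionFree (ExteriorAlgebra R (Fin (2 * Fintype.card n) → R)) :=
    e.ExteriorAlgebra.repr.injective.isAddTorsionFree e.ExteriorAlgebra.repr.toAddMonoidHom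
  have sum_apply (a b : n) : (∑ i, (A i).map (· • ι R (e i))) a b = ι R (∑ i, A i a b • e i) := by
    simp [Matrix.sum_apply]
  have pow_eq_zero : (∑ i, (A i).map (· • ι R (e i))) ^ (2 * Fintype.card n) = 0 := by
    refine matrix_pow_two_mul_card_eq_zero_of_anticommute fun a b c d => ?_
    rw [sum_apply, sum_apply]
    exact eq_neg_of_add_eq_zero_left (ι_add_mul_swap ..)
  ext a b
  apply eq_zero_of_smul_ιMulti_basisFun_eq_zero
  rw [sum_map_smul_ι_pow] at pow_eq_zero
  exact congrFun (congrFun pow_eq_zero a) b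

theorem standardPolynomial_matrix_eq_zero
    (A : Fin (2 * Fintype.card n) → Matrix n n R) : standardPolynomial R _ _ A = 0 := by
  suffices h : standardPolynomial R (Matrix n n R) (2 * Fintype.card n) = 0 by
    rw [h, AlternatingMap.zero_apply]
  -- The matrix units are images of integer matrices, and `ℤ` is torsion-free.
  refine (Matrix.stdBasis R n n).ext_alternating fun v _ => ?_
  have stdBasis_eq_map (i) : Matrix.stdBasis R n n (v i) =
      (Int.castRingHom R).mapMatrix (Matrix.single (v i).1 (v i).2 1) := by
    rw [← Prod.mk.eta (p := v i), Matrix.stdBasis_eq_single, RingHom.mapMatrix_apply,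
      Matrix.map_single, map_one]
  simp only [stdBasis_eq_map]
  rw [← map_standardPolynomial ℤ R, standardPolynomial_matrix_eq_zero_of_isAddTorsionFree, map_zero,
    AlternatingMap.zero_apply]

end AmitsurLevitzki

section ExteriorAlgebra

open ExteriorAlgebra

variable {R M : Type*} [CommRing R] [AddCommGroup M] [Module R M]

variable (R M) in
theorem iSup_exteriorPower : ⨆ i : ℕ, ⋀[R]^i M = ⊤ :=
  (DirectSum.Decomposition.isInternal fun i : ℕ => ⋀[R]^i M).submodule_iSup_eq_top

variable (R M) in
theorem commute_exteriorPower_top (j : ℕ) : Commute (⋀[R]^j M) ⊤ := by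
  simp only [commute_iff_eq, ← iSup_exteriorPower R M, Submodule.iSup_mul, Submodule.mul_iSup,
    ← pow_add, add_comm]

variable (R M) in
theorem exteriorPower_mul_top_pow_le (j q : ℕ) :
    (⋀[R]^j M * ⊤) ^ q ≤ ⋀[R]^(j * q) M * ⊤ := by
  rw [(commute_exteriorPower_top R M j).mul_pow, exteriorPower, ← pow_mul]
  gcongr
  exact le_top

variable (R M) in
theorem one_sup_range_ι_sup_exteriorPower_two_mul_top :
    1 ⊔ LinearMap.range (ι R) ⊔ ⋀[R]^2 M * ⊤ = ⊤ := by
  rw [eq_top_iff, ← iSup_exteriorPower R M]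
  refine iSup_le fun i => ?_
  match i with
  | 0 => exact (pow_zero _).le.trans (le_sup_left.trans le_sup_left)
  | 1 => exact (pow_one _).le.trans (le_sup_right.trans le_sup_left)
  | i + 2 =>
    refine le_sup_of_le_right ?_
    rw [exteriorPower, add_comm, pow_add]
    gcongr
    exact le_iSup (fun i => ⋀[R]^i M) i

theorem exteriorPower_eq_bot_of_span_eq_top {I : Type*} [Fintype I] [LinearOrder I] {v : I → M}
    (hv : Submodule.span R (Set.range v) = ⊤) {j : ℕ} (hj : Fintype.card I < j) :
    ⋀[R]^j M = ⊥ := by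
  have : IsEmpty (Set.powersetCard I j) :=
    ⟨fun s => (s.2 ▸ Finset.card_le_univ s.1).not_gt hj⟩
  have := exteriorPower.ιMulti_family_span_of_span (n := j) R hv
  rw [Set.range_eq_empty, Submodule.span_empty] at this
  exact Submodule.subsingleton_iff_eq_bot.mp <|
    (Submodule.subsingleton_iff R).mp (subsingleton_of_bot_eq_top this)

section TrivSqZeroExt

variable [Module Rᵐᵒᵖ M] [IsCentralScalar R M]

variable (R M) in
theorem exteriorPower_two_mul_top_le_ker_toTrivSqZeroExt :
    ⋀[R]^2 M * ⊤ ≤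
      LinearMap.ker (toTrivSqZeroExt : ExteriorAlgebra R M →ₐ[R] _).toLinearMap := by
  rw [exteriorPower, sq]
  refine Submodule.mul_le.mpr fun y hy z _ => ?_
  suffices h : toTrivSqZeroExt y = 0 by
    rw [LinearMap.mem_ker, AlgHom.toLinearMap_apply, map_mul, h, zero_mul]
  induction hy using Submodule.mul_induction_on' with
  | mem_mul_mem a ha b hb =>
    obtain ⟨u, rfl⟩ := ha
    obtain ⟨v, rfl⟩ := hb
    rw [map_mul, toTrivSqZeroExt_ι, toTrivSqZeroExt_ι, TrivSqZeroExt.inr_mul_inr]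
  | add a _ b _ ha hb => rw [map_add, ha, hb, add_zero]

variable (R M) in
theorem ker_toTrivSqZeroExt :
    LinearMap.ker (toTrivSqZeroExt : ExteriorAlgebra R M →ₐ[R] _).toLinearMap =
      ⋀[R]^2 M * ⊤ := by
  refine le_antisymm (fun x hx => ?_) (exteriorPower_two_mul_top_le_ker_toTrivSqZeroExt R M)
  obtain ⟨y, hy, z, hz, rfl⟩ := Submodule.mem_sup.mp <|
    (one_sup_range_ι_sup_exteriorPower_two_mul_top R M).ge (Submodule.mem_top (x := x))
  obtain ⟨_, hr, _, ⟨v, rfl⟩, rfl⟩ := Submodule.mem_sup.mp hy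
  obtain ⟨r, rfl⟩ := Submodule.mem_one.mp hr
  have hz0 : toTrivSqZeroExt z = 0 := exteriorPower_two_mul_top_le_ker_toTrivSqZeroExt R M hz
  have inl_add_inr : (TrivSqZeroExt.inl r + TrivSqZeroExt.inr v : TrivSqZeroExt R M) = 0 := by
    simpa [hz0, TrivSqZeroExt.algebraMap_eq_inl] using hx
  obtain rfl : r = 0 := by simpa using congrArg TrivSqZeroExt.fst inl_add_inr
  obtain rfl : v = 0 := by simpa using congrArg TrivSqZeroExt.snd inl_add_inr
  simpa using hz

end TrivSqZeroExt

theorem submodule_matrix_pow_le {S n : Type*} [Fintype n] [DecidableEq n] [Semiring S] [Algebra R S]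
    (P : Submodule R S) (q : ℕ) :
    P.matrix (m := n) (n := n) ^ q ≤ (P ^ q).matrix := by
  induction q with
  | zero =>
    rintro _ ⟨r, rfl⟩ i j
    rw [pow_zero]
    by_cases hij : i = j
    · exact ⟨r, by simp [hij]⟩
    · simp [hij]
  | succ q ih =>
    rw [pow_succ, pow_succ]
    refine Submodule.mul_le.mpr fun A hA B hB i j => ?_
    exact Submodule.sum_mem _ fun c _ => Submodule.mul_mem_mul (ih hA i c) (hB c j)

variable {n : Type*} [Fintype n] [DecidableEq n]

theorem standardPolynomial_matrix_exteriorAlgebra_mem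
    (A : Fin (2 * Fintype.card n) → Matrix n n (ExteriorAlgebra R M)) :
    standardPolynomial R _ _ A ∈ (⋀[R]^2 M * ⊤).matrix (m := n) (n := n) := by
  -- `TrivSqZeroExt R M` is a ring only for an `R`-bimodule `M`: let `R` act on the right as well.
  let : Module Rᵐᵒᵖ M := Module.compHom _ ((RingHom.id R).fromOpposite mul_comm)
  have : IsCentralScalar R M := ⟨fun _ _ => rfl⟩
  let f := (toTrivSqZeroExt : ExteriorAlgebra R M →ₐ[R] _).toRingHom
  have h : f.mapMatrix (standardPolynomial R _ _ A) = 0 := by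
    rw [map_standardPolynomial R (TrivSqZeroExt R M), standardPolynomial_matrix_eq_zero]
  intro i j
  rw [← ker_toTrivSqZeroExt]
  exact congrFun (congrFun h i) j

end ExteriorAlgebra

theorem grassmann_matrix_standard_identity_general {R M n : Type*} [CommRing R] [AddCommGroup M]
    [Module R M] [Fintype n] [DecidableEq n] {q k : ℕ} (hM : ⋀[R]^(2 * q) M = ⊥)
    (hk : k = 2 * Fintype.card n * q)
    (A : Fin k → Matrix n n (ExteriorAlgebra R M)) :
    ∑ π : Equiv.Perm (Fin k),
      (Equiv.Perm.sign π : ℤ) • (List.ofFn fun i => A (π i)).prod = 0 := by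
  subst hk
  have mem_pow := standardPolynomial_mul_mem_pow
    (standardPolynomial_matrix_exteriorAlgebra_mem (R := R) (M := M)) q A
  ext i j
  have entry_mem := exteriorPower_mul_top_pow_le R M 2 q
    (submodule_matrix_pow_le _ _ mem_pow i j)
  rwa [hM, Submodule.bot_mul, Submodule.mem_bot, standardPolynomial_apply] at entry_mem

/-- The ring of `n × n` matrices over the Grassmann algebra of rank `m` satisfies the
standard identity of degree `k = 2n(⌊m/2⌋ + 1)`. -/
theorem grassmann_matrix_standard_identity
    (R : Type*) [CommRing R] (m n : ℕ) (hn : 1 ≤ n)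
    (k : ℕ) (hk : k = 2 * n * (m / 2 + 1))
    (A : Fin k → Matrix (Fin n) (Fin n) (ExteriorAlgebra R (Fin m → R))) :
    ∑ π : Equiv.Perm (Fin k),
      (Equiv.Perm.sign π : ℤ) • (List.ofFn fun i => A (π i)).prod = 0 :=
  grassmann_matrix_standard_identity_general
    (exteriorPower_eq_bot_of_span_eq_top (Pi.basisFun R (Fin m)).span_eq
      (by rw [Fintype.card_fin]; omega : Fintype.card (Fin m) < 2 * (m / 2 + 1)))
    (by rwa [Fintype.card_fin]) A
end
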